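/- Let h be a nonnegative continuous weak solution of v∂ₓh − ∂_vvh = 0 in (0,64)×(−4,4) with h = 0 on {0}×(0,4). Then there is a constant c ≥ 1, independent of h, such that the infimum of h(x,v)/φ₀(x,v) over (x,v) ∈ (1,8)×(−2,2) is at most c times the infimum of h(x,v)/φ₀(x,v) over (x,v) ∈ (0,1)×(−1,1). -/

import Mathlib

/-!
The function `φ₀` is self-similar, `φ₀(x, v) = x^{1/6} Phi(v x^{-1/3})`, and solves
`v ∂ₓφ₀ = ∂ᵥᵥφ₀` classically for `x > 0`; it decreases in `v` and increases in `x`. These facts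
follow from integral formulas for the profile `Phi` on each half-line, which are glued at `0` with
the Beta integral (`Phi_deriv`, `Phi1_deriv`).

Let `m` be the infimum of `h / φ₀` over `(1, 8) × (-2, 2)`, so that `h(2, v) ≥ m φ₀(2, v)`. For
`v < 0` the variable `-x` plays the role of time, and the lower bound at `x = 2` propagates to
`h(x, -1) ≥ θ := m φ₀(2, 0) e^{-80}` for all `x ∈ (0, 2]` (`lower_left`). This gives `h ≥ θ` on
`v = -1` and on `{2} × [-1, 0]`. Comparing `h` on `(δ, 2) × (-1, 2)` with a multiple of
`φ₀(x, v) - φ₀(x, 2) + C max(-v, 0)³ - φ₀(δ, 0)` and letting `δ → 0` yields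
`h ≥ c θ (φ₀(x, v) - φ₀(x, 2))` (`lower_phi`). On `(0, 1) × (-1, 1)` one has
`φ₀(x, 2) ≤ e^{-7/9} φ₀(x, v)` (`phi0_ratio`), which gives the claim. Since `h ≥ 0`, the boundary
condition `h = 0` on `{0} × (0, 4)` is not needed for this lower bound.

The comparison principle (`comparison`) is for continuous weak solutions against classical
subsolutions. It is proved by mollifying `h` (`approx`): with a mollification scale in `v` much
smaller than the one in `x`, the mollified function `H` satisfies `|v ∂ₓH - ∂ᵥᵥH| ≤ ε` and is
uniformly close to `h`, and the classical minimum principle applies to `H` minus the subsolution,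
perturbed by `ε v²`.
-/

noncomputable section

open MeasureTheory Set Filter
open scoped ENNReal

/-- The one-dimensional phase space, with points `p = (x, v)`. -/
abbrev P2 : Type := ℝ × ℝ

/-- `hv` is the weak derivative of `h` in the second (velocity) variable on `D`. -/
def IsWeakVDeriv (D : Set P2) (h hv : P2 → ℝ) : Prop :=
  ∀ ψ : P2 → ℝ, ContDiff ℝ ((⊤ : ℕ∞) : WithTop ℕ∞) ψ → HasCompactSupport ψ →
    tsupport ψ ⊆ D →
    (∫ p in D, h p * fderiv ℝ ψ p ((0:ℝ), (1:ℝ))) = -∫ p in D, hv p * ψ p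

/-- `U₁(z) = (1/Γ(5/6)) ∫₀^∞ e^{−zξ} ξ^{−1/6} (1+ξ)^{−7/6} dξ`. -/
def U1 (z : ℝ) : ℝ :=
  (1 / Real.Gamma (5/6)) *
    ∫ ξ in Set.Ioi (0:ℝ), Real.exp (-(z * ξ)) * ξ ^ (-(1:ℝ)/6) * (1 + ξ) ^ (-(7:ℝ)/6)

/-- `U₂(z) = (1/Γ(1/6)) ∫₀^∞ e^{−ξ} ξ^{−5/6} (z+ξ)^{1/6} dξ`. -/
def U2 (z : ℝ) : ℝ :=
  (1 / Real.Gamma (1/6)) *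
    ∫ ξ in Set.Ioi (0:ℝ), Real.exp (-ξ) * ξ ^ (-(5:ℝ)/6) * (z + ξ) ^ ((1:ℝ)/6)

/-- The explicit `1/2`-homogeneous solution `φ₀` of the stationary kinetic Kolmogorov equation
in the half-line with absorbing boundary condition. -/
def phi0 (x v : ℝ) : ℝ :=
  if v < 0 then x ^ ((1:ℝ)/6) * U2 (-(v ^ 3) / (9 * x))
  else (Real.Gamma (7/6) / Real.Gamma (1/6)) * x ^ ((1:ℝ)/6) *
    Real.exp (-(v ^ 3) / (9 * x)) * U1 (v ^ 3 / (9 * x))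

/-- The box `H_r = (0, r³) × (−r, r)`. -/
def Hrect (r : ℝ) : Set P2 := Set.Ioo (0:ℝ) (r ^ 3) ×ˢ Set.Ioo (-r) r

/-- Weak solution of `v ∂ₓ h − ∂ᵥᵥ h = 0` in `(0,R³) × (−R,R)` with `h = 0` on `{0} × (0,R)`. -/
def IsWeakSolRect (R : ℝ) (h hv : P2 → ℝ) : Prop :=
  LocallyIntegrableOn (fun p => h p ^ 2) (Hrect R) ∧
  LocallyIntegrableOn (fun p => hv p ^ 2) (Hrect R) ∧
  IsWeakVDeriv (Hrect R) h hv ∧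
  ∀ ψ : P2 → ℝ, ContDiff ℝ ((⊤ : ℕ∞) : WithTop ℕ∞) ψ → HasCompactSupport ψ →
    tsupport ψ ⊆ Set.Ico 0 (R ^ 3) ×ˢ Set.Ioo (-R) R →
    tsupport ψ ∩ {p : P2 | p.1 = 0} ⊆ {(0:ℝ)} ×ˢ Set.Ioo (0:ℝ) R →
    (-∫ p in Hrect R, h p * (p.2 * fderiv ℝ ψ p ((1:ℝ), (0:ℝ))))
        + (∫ p in Hrect R, hv p * fderiv ℝ ψ p ((0:ℝ), (1:ℝ))) = 0

open scoped Topology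

/-! ### Kummer-type integrals -/

/-- The integral `∫₀^∞ e^{-zξ} ξ^a (1+ξ)^b dξ`, a multiple of a Kummer (Tricomi) function of `z`. -/
def kum (a b z : ℝ) : ℝ := ∫ ξ in Ioi (0:ℝ), Real.exp (-(z * ξ)) * ξ ^ a * (1 + ξ) ^ b

lemma kum_meas (a b z : ℝ) :
    AEStronglyMeasurable (fun ξ : ℝ => Real.exp (-(z * ξ)) * ξ ^ a * (1 + ξ) ^ b)
      (volume.restrict (Ioi (0:ℝ))) := by
  have : Measurable (fun ξ : ℝ => Real.exp (-(z * ξ)) * ξ ^ a * (1 + ξ) ^ b) := by fun_prop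
  exact this.aestronglyMeasurable

lemma exp_rpow_int {a z : ℝ} (ha : -1 < a) (hz : 0 < z) :
    IntegrableOn (fun ξ : ℝ => Real.exp (-(z * ξ)) * ξ ^ a) (Ioi 0) := by
  have := integrableOn_rpow_mul_exp_neg_mul_rpow (p := 1) (s := a) (b := z) ha one_pos hz
  refine this.congr_fun (fun ξ hξ => ?_) measurableSet_Ioi
  simp only [Real.rpow_one]
  rw [mul_comm, neg_mul]

lemma kum_int {a b z : ℝ} (ha : -1 < a) (hb : b ≤ 1) (hz : 0 < z) :
    IntegrableOn (fun ξ : ℝ => Real.exp (-(z * ξ)) * ξ ^ a * (1 + ξ) ^ b) (Ioi 0) := by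
  have h1 := exp_rpow_int ha hz
  have h2 := exp_rpow_int (a := a + 1) (by linarith) hz
  refine (h1.add h2).mono' (kum_meas a b z) ?_
  filter_upwards [ae_restrict_mem measurableSet_Ioi] with ξ hξ
  have hξ : 0 < ξ := hξ
  have h3 : (1 + ξ) ^ b ≤ 1 + ξ := by
    calc (1 + ξ) ^ b ≤ (1 + ξ) ^ (1:ℝ) := Real.rpow_le_rpow_of_exponent_le (by linarith) hb
      _ = _ := Real.rpow_one _
  rw [Real.norm_of_nonneg (by positivity)]
  simp only [Pi.add_apply]
  rw [Real.rpow_add_one hξ.ne']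
  have h4 : 0 ≤ Real.exp (-(z * ξ)) * ξ ^ a := by positivity
  nlinarith [mul_le_mul_of_nonneg_left h3 h4]

lemma kum_int_zero {a b : ℝ} (ha : -1 < a) (hb : b ≤ 0) (hab : a + b < -1) :
    IntegrableOn (fun ξ : ℝ => ξ ^ a * (1 + ξ) ^ b) (Ioi 0) := by
  have hm : Measurable (fun ξ : ℝ => ξ ^ a * (1 + ξ) ^ b) := by fun_prop
  rw [← Ioc_union_Ioi_eq_Ioi (zero_le_one (α := ℝ))]
  refine IntegrableOn.union ?_ ?_
  · have := (intervalIntegral.intervalIntegrable_rpow' (a := 0) (b := 1) ha)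
    rw [intervalIntegrable_iff_integrableOn_Ioc_of_le zero_le_one] at this
    refine this.mono' hm.aestronglyMeasurable ?_
    filter_upwards [ae_restrict_mem measurableSet_Ioc] with ξ hξ
    have hξ0 : 0 < ξ := hξ.1
    rw [Real.norm_of_nonneg (by positivity)]
    have : (1 + ξ) ^ b ≤ 1 := Real.rpow_le_one_of_one_le_of_nonpos (by linarith) hb
    exact mul_le_of_le_one_right (by positivity) this
  · refine (integrableOn_Ioi_rpow_of_lt hab one_pos).mono' hm.aestronglyMeasurable ?_
    filter_upwards [ae_restrict_mem measurableSet_Ioi] with ξ hξ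
    have hξ0 : 0 < ξ := lt_trans one_pos hξ
    rw [Real.norm_of_nonneg (by positivity), Real.rpow_add hξ0]
    have : (1 + ξ) ^ b ≤ ξ ^ b := Real.rpow_le_rpow_of_nonpos hξ0 (by linarith) hb
    gcongr

lemma kum_int' {a b z : ℝ} (ha : -1 < a) (hb : b ≤ 0) (hab : a + b < -1) (hz : 0 ≤ z) :
    IntegrableOn (fun ξ : ℝ => Real.exp (-(z * ξ)) * ξ ^ a * (1 + ξ) ^ b) (Ioi 0) := by
  refine (kum_int_zero ha hb hab).mono' (kum_meas a b z) ?_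
  filter_upwards [ae_restrict_mem measurableSet_Ioi] with ξ hξ
  have hξ : 0 < ξ := hξ
  rw [Real.norm_of_nonneg (by positivity), mul_assoc]
  refine mul_le_of_le_one_left (by positivity) (Real.exp_le_one_iff.2 ?_)
  nlinarith [mul_nonneg hz hξ.le]

lemma kum_pos_aux {a b z : ℝ}
    (h : IntegrableOn (fun ξ : ℝ => Real.exp (-(z * ξ)) * ξ ^ a * (1 + ξ) ^ b) (Ioi 0)) :
    0 < kum a b z := by
  unfold kum
  rw [setIntegral_pos_iff_support_of_nonneg_ae _ h]
  · have : Function.support (fun ξ : ℝ => Real.exp (-(z * ξ)) * ξ ^ a * (1 + ξ) ^ b) ∩ Ioi 0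
        = Ioi 0 := by
      apply inter_eq_right.2
      intro ξ hξ
      have hξ : 0 < ξ := hξ
      simp only [Function.mem_support]
      positivity
    rw [this]; simp
  · filter_upwards [ae_restrict_mem measurableSet_Ioi] with ξ hξ
    have hξ : 0 < ξ := hξ
    simp only [Pi.zero_apply]
    positivity

lemma kum_mono_aux {a b z w : ℝ} (hzw : z ≤ w)
    (hz : IntegrableOn (fun ξ : ℝ => Real.exp (-(z * ξ)) * ξ ^ a * (1 + ξ) ^ b) (Ioi 0))
    (hw : IntegrableOn (fun ξ : ℝ => Real.exp (-(w * ξ)) * ξ ^ a * (1 + ξ) ^ b) (Ioi 0)) :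
    kum a b w ≤ kum a b z := by
  unfold kum
  refine setIntegral_mono_on hw hz measurableSet_Ioi fun ξ hξ => ?_
  have hξ : 0 < ξ := hξ
  gcongr

lemma kum_hasDerivAt {a b z : ℝ} (ha : -1 < a) (hb : b ≤ 1) (hz : 0 < z) :
    HasDerivAt (kum a b) (-(kum (a + 1) b z)) z := by
  have hz2 : 0 < z / 2 := by linarith
  have key := hasDerivAt_integral_of_dominated_loc_of_deriv_le
    (μ := volume.restrict (Ioi (0:ℝ))) (x₀ := z) (s := Ioi (z / 2))
    (F := fun z ξ => Real.exp (-(z * ξ)) * ξ ^ a * (1 + ξ) ^ b)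
    (F' := fun z ξ => -(Real.exp (-(z * ξ)) * ξ ^ (a + 1) * (1 + ξ) ^ b))
    (bound := fun ξ => Real.exp (-(z / 2 * ξ)) * ξ ^ (a + 1) * (1 + ξ) ^ b)
    (Ioi_mem_nhds (by linarith)) (Eventually.of_forall fun w => kum_meas a b w)
    (kum_int ha hb hz) (kum_meas (a + 1) b z).neg ?_ (kum_int (by linarith) hb hz2) ?_
  · have := key.2
    rw [integral_neg] at this
    exact this
  · filter_upwards [ae_restrict_mem measurableSet_Ioi] with ξ hξ w hw
    have hξ : 0 < ξ := hξ
    have hw : z / 2 < w := hw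
    rw [norm_neg, Real.norm_of_nonneg (by positivity)]
    gcongr
  · filter_upwards [ae_restrict_mem measurableSet_Ioi] with ξ hξ w hw
    have hξ : 0 < ξ := hξ
    have h1 : HasDerivAt (fun w : ℝ => Real.exp (-(w * ξ))) (Real.exp (-(w * ξ)) * (-(1 * ξ))) w :=
      ((hasDerivAt_id w).mul_const ξ).neg.exp
    refine ((h1.mul_const _).mul_const _).congr_deriv ?_
    rw [Real.rpow_add_one hξ.ne']
    ring

lemma kum_add {a b z : ℝ} (ha : -1 < a) (hb : b ≤ 1) (hz : 0 < z) :
    kum a (b + 1) z = kum a b z + kum (a + 1) b z := by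
  unfold kum
  rw [← integral_add (kum_int ha hb hz) (kum_int (by linarith) hb hz)]
  refine setIntegral_congr_fun measurableSet_Ioi fun ξ hξ => ?_
  have hξ : 0 < ξ := hξ
  rw [Real.rpow_add_one hξ.ne', Real.rpow_add_one (by positivity : (1 + ξ) ≠ 0)]
  ring

/-- The contiguity relation obtained by integrating the derivative of
`e^{-zξ} ξ^{a+1} (1+ξ)^{b+1}` over `(0, ∞)`. -/
lemma kum_ibp {a b z : ℝ} (ha : -1 < a) (hb : b ≤ 0) (hz : 0 < z) :
    z * kum (a + 1) (b + 1) z = (a + 1) * kum a (b + 1) z + (b + 1) * kum (a + 1) b z := by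
  have i1 := kum_int (a := a + 1) (b := b + 1) (z := z) (by linarith) (by linarith) hz
  have i2 := kum_int (a := a) (b := b + 1) (z := z) (by linarith) (by linarith) hz
  have i3 := kum_int (a := a + 1) (b := b) (z := z) (by linarith) (by linarith) hz
  have i4 := ((i2.const_mul (a + 1)).add (i3.const_mul (b + 1))).sub (i1.const_mul z)
  have hd : ∀ ξ ∈ Ioi (0:ℝ), HasDerivAt
      (fun ξ : ℝ => Real.exp (-(z * ξ)) * ξ ^ (a + 1) * (1 + ξ) ^ (b + 1))
      ((a + 1) * (Real.exp (-(z * ξ)) * ξ ^ a * (1 + ξ) ^ (b + 1))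
        + (b + 1) * (Real.exp (-(z * ξ)) * ξ ^ (a + 1) * (1 + ξ) ^ b)
        - z * (Real.exp (-(z * ξ)) * ξ ^ (a + 1) * (1 + ξ) ^ (b + 1))) ξ := by
    intro ξ hξ
    have hξ : 0 < ξ := hξ
    have h1 : HasDerivAt (fun w : ℝ => Real.exp (-(z * w))) (Real.exp (-(z * ξ)) * (-(z * 1))) ξ :=
      ((hasDerivAt_id ξ).const_mul z).neg.exp
    have h2 := Real.hasDerivAt_rpow_const (x := ξ) (p := a + 1) (Or.inl hξ.ne')
    have h3 : HasDerivAt (fun ξ : ℝ => (1 + ξ) ^ (b + 1)) (1 * (b + 1) * (1 + ξ) ^ (b + 1 - 1)) ξ :=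
      ((hasDerivAt_id ξ).const_add 1).rpow_const (Or.inl (by simp; positivity))
    refine ((h1.mul h2).mul h3).congr_deriv ?_
    simp only [add_sub_cancel_right, Pi.mul_apply]
    ring
  have ht : Tendsto (fun ξ : ℝ => Real.exp (-(z * ξ)) * ξ ^ (a + 1) * (1 + ξ) ^ (b + 1))
      atTop (𝓝 0) := tendsto_zero_of_hasDerivAt_of_integrableOn_Ioi hd i4 i1
  have hc : ContinuousWithinAt
      (fun ξ : ℝ => Real.exp (-(z * ξ)) * ξ ^ (a + 1) * (1 + ξ) ^ (b + 1)) (Ici 0) 0 := by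
    apply ContinuousAt.continuousWithinAt
    refine ((by fun_prop : ContinuousAt (fun ξ : ℝ => Real.exp (-(z * ξ))) 0).mul
      (Real.continuousAt_rpow_const _ _ (Or.inr (by linarith)))).mul ?_
    exact ContinuousAt.rpow_const (by fun_prop) (Or.inl (by norm_num))
  have := integral_Ioi_of_hasDerivAt_of_tendsto hc hd i4 ht
  rw [Real.zero_rpow (by linarith)] at this
  have e := integral_sub ((i2.const_mul (a + 1)).add (i3.const_mul (b + 1))) (i1.const_mul z)
  have e2 := integral_add (i2.const_mul (a + 1)) (i3.const_mul (b + 1))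
  simp only [Pi.add_apply] at e
  rw [e, e2] at this
  simp only [integral_const_mul] at this
  unfold kum
  linarith

lemma kum_continuousWithinAt {a b : ℝ} (ha : -1 < a) (hb : b ≤ 0) (hab : a + b < -1) :
    ContinuousWithinAt (kum a b) (Ici 0) 0 := by
  unfold kum
  refine continuousWithinAt_of_dominated (bound := fun ξ : ℝ => ξ ^ a * (1 + ξ) ^ b)
    (Eventually.of_forall fun w => kum_meas a b w) ?_ (kum_int_zero ha hb hab) ?_
  · filter_upwards [self_mem_nhdsWithin] with z hz
    filter_upwards [ae_restrict_mem measurableSet_Ioi] with ξ hξ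
    have hξ : 0 < ξ := hξ
    rw [Real.norm_of_nonneg (by positivity), mul_assoc]
    refine mul_le_of_le_one_left (by positivity) (Real.exp_le_one_iff.2 ?_)
    nlinarith [mul_nonneg hz.out hξ.le]
  · filter_upwards with ξ
    apply Continuous.continuousWithinAt
    fun_prop

/-- The Beta integral `kum (p-1) (-(p+q)) 0 = Γ(p) Γ(q) / Γ(p+q)`, by the Fubini theorem. -/
lemma kum_zero_beta {p q : ℝ} (hp : 0 < p) (hq : 0 < q) :
    Real.Gamma (p + q) * kum (p - 1) (-(p + q)) 0 = Real.Gamma p * Real.Gamma q := by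
  set f : ℝ → ℝ → ℝ := fun ξ t => ξ ^ (p - 1) * (t ^ (p + q - 1) * Real.exp (-((1 + ξ) * t)))
    with hf
  have hm : Measurable (Function.uncurry f) := by
    rw [hf]; unfold Function.uncurry; fun_prop
  have inner1 : ∀ ξ ∈ Ioi (0:ℝ), ∫ t in Ioi (0:ℝ), f ξ t
      = Real.Gamma (p + q) * (ξ ^ (p - 1) * (1 + ξ) ^ (-(p + q))) := by
    intro ξ hξ
    have hξ : 0 < ξ := hξ
    simp only [hf]
    rw [integral_const_mul, Real.integral_rpow_mul_exp_neg_mul_Ioi (by linarith) (by linarith),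
      one_div, Real.inv_rpow (by linarith), Real.rpow_neg (by linarith)]
    ring
  have inner2 : ∀ t ∈ Ioi (0:ℝ), ∫ ξ in Ioi (0:ℝ), f ξ t
      = Real.Gamma p * (Real.exp (-t) * t ^ (q - 1)) := by
    intro t ht
    have ht : 0 < t := ht
    have : ∀ ξ, f ξ t = (t ^ (p + q - 1) * Real.exp (-t)) * (ξ ^ (p - 1) * Real.exp (-(t * ξ))) := by
      intro ξ
      simp only [hf]
      rw [show -((1 + ξ) * t) = -t + -(t * ξ) by ring, Real.exp_add]; ring
    simp only [this]
    rw [integral_const_mul, Real.integral_rpow_mul_exp_neg_mul_Ioi hp ht, one_div,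
      Real.inv_rpow ht.le, ← Real.rpow_neg ht.le]
    rw [show q - 1 = (p + q - 1) + (-p) by ring, Real.rpow_add ht]
    ring
  have hInteg : Integrable (Function.uncurry f)
      ((volume.restrict (Ioi (0:ℝ))).prod (volume.restrict (Ioi (0:ℝ)))) := by
    rw [integrable_prod_iff hm.aestronglyMeasurable]
    constructor
    · filter_upwards [ae_restrict_mem measurableSet_Ioi] with ξ hξ
      have hξ : 0 < ξ := hξ
      have := (exp_rpow_int (a := p + q - 1) (z := 1 + ξ) (by linarith) (by linarith)).const_mul
        (ξ ^ (p - 1))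
      refine this.congr (Eventually.of_forall fun t => ?_)
      simp only [Function.uncurry, hf]; ring
    · have h1 : IntegrableOn (fun ξ : ℝ => Real.Gamma (p + q) *
          (ξ ^ (p - 1) * (1 + ξ) ^ (-(p + q)))) (Ioi 0) :=
        (kum_int_zero (by linarith) (by linarith) (by linarith)).const_mul _
      refine h1.congr ?_
      filter_upwards [ae_restrict_mem measurableSet_Ioi] with ξ hξ
      rw [← inner1 ξ hξ]
      refine setIntegral_congr_fun measurableSet_Ioi fun t ht => ?_
      have ht : 0 < t := ht
      have hξ : 0 < ξ := hξ
      simp only [Function.uncurry, hf]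
      rw [Real.norm_of_nonneg (by positivity)]
  have sw := integral_integral_swap hInteg
  rw [setIntegral_congr_fun measurableSet_Ioi inner1,
    setIntegral_congr_fun measurableSet_Ioi inner2, integral_const_mul, integral_const_mul,
    ← Real.Gamma_eq_integral hq] at sw
  rw [← sw]
  unfold kum
  simp

/-! ### The profile of `φ₀` -/

/-- The integral `∫₀^∞ e^{-ξ} ξ^a (z+ξ)^b dξ`. It is `kum` up to a power of `z` (`sfun_scale`), but
it extends continuously to `z = 0` for exponents where `kum` blows up there. -/
def sfun (a b z : ℝ) : ℝ := ∫ ξ in Ioi (0:ℝ), Real.exp (-ξ) * ξ ^ a * (z + ξ) ^ b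

lemma sfun_meas (a b z : ℝ) :
    AEStronglyMeasurable (fun ξ : ℝ => Real.exp (-ξ) * ξ ^ a * (z + ξ) ^ b)
      (volume.restrict (Ioi (0:ℝ))) := by
  have : Measurable (fun ξ : ℝ => Real.exp (-ξ) * ξ ^ a * (z + ξ) ^ b) := by fun_prop
  exact this.aestronglyMeasurable

lemma sfun_scale {a b z : ℝ} (hz : 0 < z) : sfun a b z = z ^ (a + b + 1) * kum a b z := by
  have h := integral_comp_mul_left_Ioi
    (fun ξ : ℝ => Real.exp (-ξ) * ξ ^ a * (z + ξ) ^ b) 0 hz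
  rw [mul_zero] at h
  unfold sfun kum
  rw [smul_eq_mul, eq_inv_mul_iff_mul_eq₀ hz.ne'] at h
  rw [← h, Real.rpow_add_one hz.ne', Real.rpow_add hz, mul_comm (z ^ a * z ^ b), mul_assoc,
    ← integral_const_mul (z ^ a * z ^ b)]
  congr 1
  refine setIntegral_congr_fun measurableSet_Ioi fun ξ hξ => ?_
  have hξ : 0 < ξ := hξ
  rw [Real.mul_rpow hz.le hξ.le, show z + z * ξ = z * (1 + ξ) by ring,
    Real.mul_rpow hz.le (by linarith)]
  ring

lemma sfun_zero {a b : ℝ} (h : -1 < a + b) : sfun a b 0 = Real.Gamma (a + b + 1) := by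
  unfold sfun
  rw [Real.Gamma_eq_integral (by linarith)]
  refine setIntegral_congr_fun measurableSet_Ioi fun ξ hξ => ?_
  have hξ : 0 < ξ := hξ
  simp only [zero_add, add_sub_cancel_right]
  rw [Real.rpow_add hξ]; ring

lemma sfun_cont {a b : ℝ} (ha : -1 < a) (hb : b ≤ 1) (h : -1 < a + b) :
    ContinuousWithinAt (sfun a b) (Ici 0) 0 := by
  unfold sfun
  have i1 := kum_int ha hb one_pos
  have i2 := exp_rpow_int h one_pos
  refine continuousWithinAt_of_dominated (bound := fun ξ : ℝ =>
    Real.exp (-(1 * ξ)) * ξ ^ a * (1 + ξ) ^ b + Real.exp (-(1 * ξ)) * ξ ^ (a + b))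
    (Eventually.of_forall fun w => sfun_meas a b w) ?_ (i1.add i2) ?_
  · filter_upwards [self_mem_nhdsWithin, mem_nhdsWithin_of_mem_nhds (Iio_mem_nhds zero_lt_one)]
      with z hz hz1
    filter_upwards [ae_restrict_mem measurableSet_Ioi] with ξ hξ
    have hξ : 0 < ξ := hξ
    have hz : 0 ≤ z := hz
    have hz1 : z < 1 := hz1
    rw [Real.norm_of_nonneg (by positivity), one_mul, Real.rpow_add hξ, ← mul_assoc, ← mul_add]
    refine mul_le_mul_of_nonneg_left ?_ (by positivity)
    rcases le_total 0 b with h0 | h0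
    · have : (z + ξ) ^ b ≤ (1 + ξ) ^ b := Real.rpow_le_rpow (by linarith) (by linarith) h0
      have : 0 ≤ ξ ^ b := by positivity
      linarith
    · have : (z + ξ) ^ b ≤ ξ ^ b := Real.rpow_le_rpow_of_nonpos hξ (by linarith) h0
      have : 0 ≤ (1 + ξ) ^ b := by positivity
      linarith
  · filter_upwards [ae_restrict_mem measurableSet_Ioi] with ξ hξ
    have hξ : 0 < ξ := hξ
    apply ContinuousAt.continuousWithinAt
    refine ContinuousAt.mul (by fun_prop) (ContinuousAt.rpow_const (by fun_prop) (Or.inl ?_))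
    simp [hξ.ne']

/-- The cube root of `9`. -/
def cc : ℝ := (9:ℝ) ^ ((1:ℝ)/3)
lemma cc_pos : 0 < cc := by unfold cc; positivity
lemma cc_cube : cc ^ 3 = 9 := by
  unfold cc
  rw [← Real.rpow_natCast, ← Real.rpow_mul (by norm_num)]; norm_num

lemma third_root {s : ℝ} (hs : 0 ≤ s) : (s ^ 3 / 9) ^ ((1:ℝ)/3) = s / cc := by
  have hc := cc_pos
  rw [← cc_cube, ← div_pow, ← Real.rpow_natCast (s / cc) 3, ← Real.rpow_mul (by positivity)]
  norm_num

/-- The value `Γ(1/6)`. -/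
abbrev G16 : ℝ := Real.Gamma (1/6)
/-- The value `Γ(5/6)`. -/
abbrev G56 : ℝ := Real.Gamma (5/6)
lemma G16_pos : 0 < G16 := Real.Gamma_pos_of_pos (by norm_num)
lemma G56_pos : 0 < G56 := Real.Gamma_pos_of_pos (by norm_num)
lemma G76 : Real.Gamma (7/6) = G16 / 6 := by
  have := Real.Gamma_add_one (s := 1/6) (by norm_num)
  norm_num at this ⊢
  rw [this]; ring

/-- The self-similar profile: `φ₀(x, v) = x^{1/6} Phi(v x^{-1/3})`. -/
def Phi (s : ℝ) : ℝ := phi0 1 s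

/-- The derivative of `Phi`, in closed form on each side of `0` (see `Phi_deriv`). -/
def Phi1 (s : ℝ) : ℝ :=
  if s < 0 then -(1 / (2 * cc * G16)) * kum (-(5:ℝ)/6) (-(5:ℝ)/6) (-(s ^ 3) / 9)
  else -(cc ^ 2 / (18 * G56)) * (Real.exp (-(s ^ 3) / 9) * sfun (-(1:ℝ)/6) (-(1:ℝ)/6) (s ^ 3 / 9))

lemma Phi_neg' {s : ℝ} (hs : s < 0) :
    Phi s = 1 / G16 * sfun (-(5:ℝ)/6) ((1:ℝ)/6) (-(s ^ 3) / 9) := by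
  unfold Phi phi0 U2 sfun
  rw [if_pos hs, Real.one_rpow, one_mul, mul_one]

lemma Phi_neg {s : ℝ} (hs : s < 0) :
    Phi s = -(s / (cc * G16)) * kum (-(5:ℝ)/6) ((1:ℝ)/6) (-(s ^ 3) / 9) := by
  have hz : 0 < -(s ^ 3) / 9 := by
    have : 0 < (-s) ^ 3 := pow_pos (by linarith) 3
    nlinarith
  rw [Phi_neg' hs, sfun_scale hz]
  have : (-(s ^ 3) / 9) ^ (-(5:ℝ)/6 + 1/6 + 1) = (-s) / cc := by
    rw [← third_root (by linarith : 0 ≤ -s)]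
    congr 1
    · ring
    · norm_num
  rw [this]
  have := G16_pos; have := cc_pos
  field_simp

lemma Phi_nonneg {s : ℝ} (hs : 0 ≤ s) :
    Phi s = 1 / (6 * G56) * (Real.exp (-(s ^ 3) / 9) * kum (-(1:ℝ)/6) (-(7:ℝ)/6) (s ^ 3 / 9)) := by
  unfold Phi phi0 U1 kum
  rw [if_neg (not_lt.2 hs), G76]
  have h1 := G16_pos; have h2 := G56_pos
  simp only [Real.one_rpow, mul_one]
  unfold G16 at *
  field_simp

lemma Phi1_pos_s {s : ℝ} (hs : 0 < s) : Phi1 s = -(1 / (18 * G56)) * (s ^ 2 *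
    (Real.exp (-(s ^ 3) / 9) * kum (-(1:ℝ)/6) (-(1:ℝ)/6) (s ^ 3 / 9))) := by
  unfold Phi1
  rw [if_neg (not_lt.2 hs.le), sfun_scale (by positivity)]
  have h0 := third_root hs.le
  have : (s ^ 3 / 9) ^ (-(1:ℝ)/6 + -(1:ℝ)/6 + 1) = (s / cc) ^ 2 := by
    rw [← h0, ← Real.rpow_natCast ((s ^ 3 / 9) ^ ((1:ℝ)/3)) 2, ← Real.rpow_mul (by positivity)]
    norm_num
  rw [this]
  have := cc_pos; have := G56_pos
  field_simp

lemma tendsto_left : Tendsto (fun s : ℝ => -(s ^ 3) / 9) (𝓝[<] 0) (𝓝[≥] 0) := by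
  refine tendsto_nhdsWithin_iff.2 ⟨?_, ?_⟩
  · have : ContinuousAt (fun s : ℝ => -(s ^ 3) / 9) 0 := by fun_prop
    have h := this.tendsto
    simp only [ne_eq, OfNat.ofNat_ne_zero, not_false_eq_true, zero_pow, neg_zero, zero_div] at h
    exact h.mono_left nhdsWithin_le_nhds
  · filter_upwards [self_mem_nhdsWithin] with s hs
    have : 0 < (-s) ^ 3 := pow_pos (by linarith [hs.out]) 3
    rw [mem_Ici]
    nlinarith

lemma tendsto_right : Tendsto (fun s : ℝ => s ^ 3 / 9) (𝓝[>] 0) (𝓝[≥] 0) := by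
  refine tendsto_nhdsWithin_iff.2 ⟨?_, ?_⟩
  · have : ContinuousAt (fun s : ℝ => s ^ 3 / 9) 0 := by fun_prop
    have h := this.tendsto
    simp only [ne_eq, OfNat.ofNat_ne_zero, not_false_eq_true, zero_pow, zero_div] at h
    exact h.mono_left nhdsWithin_le_nhds
  · filter_upwards [self_mem_nhdsWithin] with s hs
    have hs : 0 < s := hs
    rw [mem_Ici]
    positivity

lemma tendsto_exp_right : Tendsto (fun s : ℝ => Real.exp (-(s ^ 3) / 9)) (𝓝[>] 0) (𝓝 1) := by
  have : ContinuousAt (fun s : ℝ => Real.exp (-(s ^ 3) / 9)) 0 := by fun_prop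
  have h := this.tendsto
  simp only [ne_eq, OfNat.ofNat_ne_zero, not_false_eq_true, zero_pow, neg_zero, zero_div,
    Real.exp_zero] at h
  exact h.mono_left nhdsWithin_le_nhds

/-- The value of `Phi` at `0` agrees with the limit from the left, by the Beta integral. -/
lemma Phi_zero : Phi 0 = 1 / G16 * Real.Gamma (1/3) := by
  rw [Phi_nonneg le_rfl]
  have hb := kum_zero_beta (p := 5/6) (q := 1/3) (by norm_num) (by norm_num)
  norm_num at hb ⊢
  have h7 := G76
  have h1 := G16_pos; have h2 := G56_pos
  rw [h7] at hb
  unfold G16 G56 at *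
  field_simp
  linarith

lemma Phi_cont_zero : ContinuousAt Phi 0 := by
  rw [continuousAt_iff_continuous_left'_right']
  constructor
  · have h := (sfun_cont (a := -(5:ℝ)/6) (b := 1/6) (by norm_num) (by norm_num)
      (by norm_num)).tendsto.comp tendsto_left
    rw [sfun_zero (by norm_num)] at h
    have h2 := h.const_mul (1 / G16)
    rw [show (-(5:ℝ)/6 + 1/6 + 1) = 1/3 by norm_num, ← Phi_zero] at h2
    refine Tendsto.congr' ?_ h2
    filter_upwards [self_mem_nhdsWithin] with s hs
    rw [Phi_neg' hs]; rfl
  · have h := (kum_continuousWithinAt (a := -(1:ℝ)/6) (b := -(7:ℝ)/6) (by norm_num) (by norm_num)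
      (by norm_num)).tendsto.comp tendsto_right
    have h2 := (tendsto_exp_right.mul h).const_mul (1 / (6 * G56))
    have e : Phi 0 = 1 / (6 * G56) * (1 * kum (-(1:ℝ)/6) (-(7:ℝ)/6) 0) := by
      rw [Phi_nonneg le_rfl]; simp
    rw [← e] at h2
    refine Tendsto.congr' ?_ h2
    filter_upwards [self_mem_nhdsWithin] with s hs
    rw [Phi_nonneg hs.out.le]; rfl

/-- The two one-sided closed forms of `Phi1` agree at `0`, by the Beta integral. -/
lemma Phi1_zero : Phi1 0 = -(1 / (2 * cc * G16)) * kum (-(5:ℝ)/6) (-(5:ℝ)/6) 0 := by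
  unfold Phi1
  rw [if_neg (lt_irrefl _)]
  have hb := kum_zero_beta (p := 1/6) (q := 2/3) (by norm_num) (by norm_num)
  have hs := sfun_zero (a := -(1:ℝ)/6) (b := -(1:ℝ)/6) (by norm_num)
  norm_num at hb hs ⊢
  rw [hs]
  have h1 := G16_pos; have h2 := G56_pos; have h3 := cc_pos; have h4 := cc_cube
  unfold G16 G56 at *
  field_simp
  rw [h4]
  linarith

lemma Phi1_cont_zero : ContinuousAt Phi1 0 := by
  rw [continuousAt_iff_continuous_left'_right']
  constructor
  · have h := (kum_continuousWithinAt (a := -(5:ℝ)/6) (b := -(5:ℝ)/6) (by norm_num) (by norm_num)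
      (by norm_num)).tendsto.comp tendsto_left
    have h2 := h.const_mul (-(1 / (2 * cc * G16)))
    rw [← Phi1_zero] at h2
    refine Tendsto.congr' ?_ h2
    filter_upwards [self_mem_nhdsWithin] with s hs
    have hs : s < 0 := hs
    simp [Phi1, hs]
  · have h := (sfun_cont (a := -(1:ℝ)/6) (b := -(1:ℝ)/6) (by norm_num) (by norm_num)
      (by norm_num)).tendsto.comp tendsto_right
    have h2 := (tendsto_exp_right.mul h).const_mul (-(cc ^ 2 / (18 * G56)))
    have e : Phi1 0 = -(cc ^ 2 / (18 * G56)) * (1 * sfun (-(1:ℝ)/6) (-(1:ℝ)/6) 0) := by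
      simp [Phi1]
    rw [← e] at h2
    refine Tendsto.congr' ?_ h2
    filter_upwards [self_mem_nhdsWithin] with s hs
    have hs : ¬ s < 0 := not_lt.2 hs.out.le
    simp [Phi1, hs]

lemma hasDerivAt_kum_neg {a b s : ℝ} (ha : -1 < a) (hb : b ≤ 1) (hs : s < 0) :
    HasDerivAt (fun s => kum a b (-(s ^ 3) / 9)) (s ^ 2 / 3 * kum (a + 1) b (-(s ^ 3) / 9)) s := by
  have hz : 0 < -(s ^ 3) / 9 := by
    have : 0 < (-s) ^ 3 := pow_pos (by linarith) 3
    nlinarith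
  have h1 : HasDerivAt (fun s : ℝ => -(s ^ 3) / 9) (-((3:ℕ) * s ^ (3 - 1)) / 9) s :=
    (hasDerivAt_pow 3 s).neg.div_const 9
  refine ((kum_hasDerivAt ha hb hz).comp s h1).congr_deriv ?_
  norm_num; ring

lemma hasDerivAt_kum_pos {a b s : ℝ} (ha : -1 < a) (hb : b ≤ 1) (hs : 0 < s) :
    HasDerivAt (fun s => kum a b (s ^ 3 / 9)) (-(s ^ 2 / 3 * kum (a + 1) b (s ^ 3 / 9))) s := by
  have hz : 0 < s ^ 3 / 9 := by positivity
  have h1 : HasDerivAt (fun s : ℝ => s ^ 3 / 9) (((3:ℕ) * s ^ (3 - 1)) / 9) s :=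
    (hasDerivAt_pow 3 s).div_const 9
  refine ((kum_hasDerivAt ha hb hz).comp s h1).congr_deriv ?_
  norm_num; ring

lemma hasDerivAt_exp_cube (s : ℝ) : HasDerivAt (fun s : ℝ => Real.exp (-(s ^ 3) / 9))
    (-(s ^ 2 / 3) * Real.exp (-(s ^ 3) / 9)) s := by
  have h1 : HasDerivAt (fun s : ℝ => -(s ^ 3) / 9) (-((3:ℕ) * s ^ (3 - 1)) / 9) s :=
    (hasDerivAt_pow 3 s).neg.div_const 9
  refine h1.exp.congr_deriv ?_
  norm_num; ring

lemma Phi_deriv_ne {s : ℝ} (hs : s ≠ 0) : HasDerivAt Phi (Phi1 s) s := by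
  rcases lt_or_gt_of_ne hs with hs | hs
  · have hz : 0 < -(s ^ 3) / 9 := by
      have : 0 < (-s) ^ 3 := pow_pos (by linarith) 3
      nlinarith
    have hk := hasDerivAt_kum_neg (a := -(5:ℝ)/6) (b := 1/6) (by norm_num) (by norm_num) hs
    have h1 : HasDerivAt (fun s : ℝ => -(s / (cc * G16))) (-(1 / (cc * G16))) s :=
      ((hasDerivAt_id s).div_const _).neg
    have h2 := h1.mul hk
    have e : Phi =ᶠ[𝓝 s] ((fun s : ℝ => -(s / (cc * G16))) *
        fun s => kum (-(5:ℝ)/6) (1/6) (-(s ^ 3) / 9)) := by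
      filter_upwards [Iio_mem_nhds hs] with t ht
      rw [Phi_neg ht]; rfl
    refine (h2.congr_of_eventuallyEq e).congr_deriv ?_
    have hi := kum_ibp (a := -(5:ℝ)/6) (b := -(5:ℝ)/6) (by norm_num) (by norm_num) hz
    have ha := kum_add (a := -(5:ℝ)/6) (b := -(5:ℝ)/6) (by norm_num) (by norm_num) hz
    norm_num at hi ha ⊢
    have : Phi1 s = -(1 / (2 * cc * G16)) * kum (-(5:ℝ)/6) (-(5:ℝ)/6) (-(s ^ 3) / 9) := by
      simp [Phi1, hs]
    rw [this]
    norm_num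
    have := cc_pos; have := G16_pos
    unfold G16 at *
    rw [neg_div] at hi ha
    field_simp
    linear_combination 18 * hi - 3 * ha
  · have hz : 0 < s ^ 3 / 9 := by positivity
    have hk := hasDerivAt_kum_pos (a := -(1:ℝ)/6) (b := -(7:ℝ)/6) (by norm_num) (by norm_num) hs
    have h2 := ((hasDerivAt_exp_cube s).mul hk).const_mul (1 / (6 * G56))
    have e : Phi =ᶠ[𝓝 s] fun s => 1 / (6 * G56) * ((fun s : ℝ => Real.exp (-(s ^ 3) / 9)) *
        fun s => kum (-(1:ℝ)/6) (-(7:ℝ)/6) (s ^ 3 / 9)) s := by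
      filter_upwards [Ioi_mem_nhds hs] with t ht
      rw [Phi_nonneg ht.out.le]; rfl
    refine (h2.congr_of_eventuallyEq e).congr_deriv ?_
    have ha := kum_add (a := -(1:ℝ)/6) (b := -(7:ℝ)/6) (by norm_num) (by norm_num) hz
    rw [Phi1_pos_s hs]
    norm_num at ha ⊢
    rw [ha]
    have := G56_pos
    unfold G56 at *
    field_simp
    ring

lemma Phi_deriv (s : ℝ) : HasDerivAt Phi (Phi1 s) s :=
  hasDerivAt_of_hasDerivAt_of_ne' (fun _ h => Phi_deriv_ne h) Phi_cont_zero Phi1_cont_zero s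

/-- Closed form, for `s < 0`, of the profile of `∂ₓφ₀`; it shows that `φ₀` increases in `x`. -/
lemma Phi_x_neg {s : ℝ} (hs : s < 0) : Phi s / 6 - s * Phi1 s / 3
    = -(s / (6 * cc * G16)) * kum ((1:ℝ)/6) (-(5:ℝ)/6) (-(s ^ 3) / 9) := by
  have hz : 0 < -(s ^ 3) / 9 := by
    have : 0 < (-s) ^ 3 := pow_pos (by linarith) 3
    nlinarith
  have ha := kum_add (a := -(5:ℝ)/6) (b := -(5:ℝ)/6) (by norm_num) (by norm_num) hz
  have : Phi1 s = -(1 / (2 * cc * G16)) * kum (-(5:ℝ)/6) (-(5:ℝ)/6) (-(s ^ 3) / 9) := by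
    simp [Phi1, hs]
  rw [this, Phi_neg hs]
  norm_num at ha ⊢
  rw [ha]
  have := cc_pos; have := G16_pos
  unfold G16 at *
  field_simp
  ring

lemma Phi1_deriv_ne {s : ℝ} (hs : s ≠ 0) :
    HasDerivAt Phi1 (s * (Phi s / 6 - s * Phi1 s / 3)) s := by
  rcases lt_or_gt_of_ne hs with hs | hs
  · rw [Phi_x_neg hs]
    have hk := (hasDerivAt_kum_neg (a := -(5:ℝ)/6) (b := -(5:ℝ)/6) (by norm_num) (by norm_num)
      hs).const_mul (-(1 / (2 * cc * G16)))
    have e : Phi1 =ᶠ[𝓝 s] fun s => -(1 / (2 * cc * G16)) *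
        kum (-(5:ℝ)/6) (-(5:ℝ)/6) (-(s ^ 3) / 9) := by
      filter_upwards [Iio_mem_nhds hs] with t ht
      have ht : t < 0 := ht
      simp [Phi1, ht]
    refine (hk.congr_of_eventuallyEq e).congr_deriv ?_
    norm_num
    have := cc_pos; have := G16_pos
    unfold G16 at *
    field_simp
    ring
  · have hz : 0 < s ^ 3 / 9 := by positivity
    have hk := hasDerivAt_kum_pos (a := -(1:ℝ)/6) (b := -(1:ℝ)/6) (by norm_num) (by norm_num) hs
    have h2 := ((hasDerivAt_pow 2 s).mul ((hasDerivAt_exp_cube s).mul hk)).const_mul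
      (-(1 / (18 * G56)))
    have e : Phi1 =ᶠ[𝓝 s] fun s => -(1 / (18 * G56)) * ((fun s : ℝ => s ^ 2) *
        ((fun s : ℝ => Real.exp (-(s ^ 3) / 9)) *
        fun s => kum (-(1:ℝ)/6) (-(1:ℝ)/6) (s ^ 3 / 9))) s := by
      filter_upwards [Ioi_mem_nhds hs] with t ht
      rw [Phi1_pos_s ht]; rfl
    refine (h2.congr_of_eventuallyEq e).congr_deriv ?_
    have ha := kum_add (a := -(1:ℝ)/6) (b := -(7:ℝ)/6) (by norm_num) (by norm_num) hz
    have hi := kum_ibp (a := -(1:ℝ)/6) (b := -(7:ℝ)/6) (by norm_num) (by norm_num) hz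
    rw [Phi1_pos_s hs, Phi_nonneg hs.le]
    norm_num at ha hi ⊢
    have := G56_pos
    unfold G56 at *
    field_simp
    linear_combination (324:ℝ) * hi + (54:ℝ) * ha

/-- The ODE solved by the profile `Phi`, which is `v ∂ₓφ₀ = ∂ᵥᵥφ₀` at `x = 1`. -/
lemma Phi1_deriv (s : ℝ) : HasDerivAt Phi1 (s * (Phi s / 6 - s * Phi1 s / 3)) s := by
  have hc : ContinuousAt (fun s => s * (Phi s / 6 - s * Phi1 s / 3)) 0 := by
    have := Phi_cont_zero; have := Phi1_cont_zero
    fun_prop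
  exact hasDerivAt_of_hasDerivAt_of_ne' (fun _ h => Phi1_deriv_ne h) Phi1_cont_zero hc s

lemma Phi_pos (s : ℝ) : 0 < Phi s := by
  have := cc_pos; have := G16_pos; have := G56_pos
  rcases lt_or_ge s 0 with hs | hs
  · have hz : 0 < -(s ^ 3) / 9 := by
      have : 0 < (-s) ^ 3 := pow_pos (by linarith) 3
      nlinarith
    rw [Phi_neg hs, ← neg_div]
    have h1 : 0 < -s := by linarith
    have := kum_pos_aux (kum_int (a := -(5:ℝ)/6) (b := 1/6) (by norm_num) (by norm_num) hz)
    positivity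
  · rw [Phi_nonneg hs]
    have := kum_pos_aux (kum_int' (a := -(1:ℝ)/6) (b := -(7:ℝ)/6) (z := s ^ 3 / 9) (by norm_num)
      (by norm_num) (by norm_num) (by positivity))
    positivity

lemma Phi1_nonpos (s : ℝ) : Phi1 s ≤ 0 := by
  have := cc_pos; have := G16_pos; have := G56_pos
  rcases lt_or_ge s 0 with hs | hs
  · have hz : 0 < -(s ^ 3) / 9 := by
      have : 0 < (-s) ^ 3 := pow_pos (by linarith) 3
      nlinarith
    have := kum_pos_aux (kum_int (a := -(5:ℝ)/6) (b := -(5:ℝ)/6) (by norm_num) (by norm_num) hz)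
    simp only [Phi1, hs, if_true]
    rw [neg_mul, neg_nonpos]
    positivity
  · simp only [Phi1, not_lt.2 hs, if_false]
    rw [neg_mul, neg_nonpos]
    have : 0 ≤ sfun (-(1:ℝ)/6) (-(1:ℝ)/6) (s ^ 3 / 9) := by
      refine setIntegral_nonneg measurableSet_Ioi fun ξ hξ => ?_
      have hξ : 0 < ξ := hξ
      positivity
    positivity

lemma Phi_anti : Antitone Phi :=
  antitone_of_hasDerivAt_nonpos Phi_deriv Phi1_nonpos

lemma Phi_x_nonneg (s : ℝ) : 0 ≤ Phi s / 6 - s * Phi1 s / 3 := by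
  rcases lt_or_ge s 0 with hs | hs
  · rw [Phi_x_neg hs, ← neg_div]
    have hz : 0 < -(s ^ 3) / 9 := by
      have : 0 < (-s) ^ 3 := pow_pos (by linarith) 3
      nlinarith
    have h1 : 0 < -s := by linarith
    have := cc_pos; have := G16_pos
    have := kum_pos_aux (kum_int (a := (1:ℝ)/6) (b := -(5:ℝ)/6) (by norm_num) (by norm_num) hz)
    positivity
  · have := Phi_pos s
    have := mul_nonneg hs (neg_nonneg.2 (Phi1_nonpos s))
    linarith

/-! ### Properties of `φ₀` -/

lemma rpow_third_cube {x : ℝ} (hx : 0 < x) : (x ^ (-(1:ℝ)/3)) ^ 3 = x⁻¹ := by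
  rw [← Real.rpow_natCast, ← Real.rpow_mul hx.le, ← Real.rpow_neg_one]; norm_num

lemma phi0_eq {x : ℝ} (hx : 0 < x) (v : ℝ) :
    phi0 x v = x ^ ((1:ℝ)/6) * Phi (v * x ^ (-(1:ℝ)/3)) := by
  have ht : 0 < x ^ (-(1:ℝ)/3) := by positivity
  have h3 : (v * x ^ (-(1:ℝ)/3)) ^ 3 = v ^ 3 / x := by
    rw [mul_pow, rpow_third_cube hx]; rfl
  have hiff : v * x ^ (-(1:ℝ)/3) < 0 ↔ v < 0 := by
    constructor
    · intro h; by_contra h'; push Not at h'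
      exact absurd h (not_lt.2 (mul_nonneg h' ht.le))
    · intro h; exact mul_neg_of_neg_of_pos h ht
  have e1 : -(v ^ 3 / x) / (9 * 1) = -(v ^ 3) / (9 * x) := by field_simp
  have e2 : (v ^ 3 / x) / (9 * 1) = (v ^ 3) / (9 * x) := by field_simp
  unfold Phi phi0
  simp only [hiff, h3, e1, e2, Real.one_rpow]
  split_ifs
  · ring
  · ring

lemma phi0_pos {x : ℝ} (hx : 0 < x) (v : ℝ) : 0 < phi0 x v := by
  rw [phi0_eq hx]
  have := Phi_pos (v * x ^ (-(1:ℝ)/3))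
  positivity

lemma phi0_anti {x : ℝ} (hx : 0 < x) {v w : ℝ} (h : v ≤ w) : phi0 x w ≤ phi0 x v := by
  rw [phi0_eq hx, phi0_eq hx]
  have ht : 0 < x ^ (-(1:ℝ)/3) := by positivity
  have := Phi_anti (mul_le_mul_of_nonneg_right h ht.le)
  gcongr

/-- The derivative of `φ₀` in `x`, see `phi0_deriv_x`. -/
def phx (x v : ℝ) : ℝ := x ^ (-(5:ℝ)/6) *
  (Phi (v * x ^ (-(1:ℝ)/3)) / 6 - v * x ^ (-(1:ℝ)/3) * Phi1 (v * x ^ (-(1:ℝ)/3)) / 3)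

/-- The derivative of `φ₀` in `v`, see `phi0_deriv_v`. -/
def phv (x v : ℝ) : ℝ := x ^ (-(1:ℝ)/6) * Phi1 (v * x ^ (-(1:ℝ)/3))

lemma phi0_deriv_x {x : ℝ} (hx : 0 < x) (v : ℝ) :
    HasDerivAt (fun y => phi0 y v) (phx x v) x := by
  have h1 := Real.hasDerivAt_rpow_const (x := x) (p := (1:ℝ)/6) (Or.inl hx.ne')
  have h2 := (Real.hasDerivAt_rpow_const (x := x) (p := -(1:ℝ)/3) (Or.inl hx.ne')).const_mul v
  have h3 := (Phi_deriv (v * x ^ (-(1:ℝ)/3))).comp x h2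
  have e : (fun y => phi0 y v) =ᶠ[𝓝 x]
      ((fun y : ℝ => y ^ ((1:ℝ)/6)) * (Phi ∘ fun y => v * y ^ (-(1:ℝ)/3))) := by
    filter_upwards [Ioi_mem_nhds hx] with y hy
    rw [phi0_eq hy]; rfl
  refine ((h1.mul h3).congr_of_eventuallyEq e).congr_deriv ?_
  unfold phx
  simp only [Function.comp]
  have r1 : x ^ ((1:ℝ)/6 - 1) = x ^ (-(5:ℝ)/6) := by norm_num
  have r2 : x ^ ((1:ℝ)/6) * x ^ (-(1:ℝ)/3 - 1) = x ^ (-(5:ℝ)/6) * x ^ (-(1:ℝ)/3) := by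
    rw [← Real.rpow_add hx, ← Real.rpow_add hx]; norm_num
  rw [r1]
  linear_combination (-(1:ℝ)/3 * v * Phi1 (v * x ^ (-(1:ℝ)/3))) * r2

lemma phi0_deriv_v {x : ℝ} (hx : 0 < x) (v : ℝ) :
    HasDerivAt (fun w => phi0 x w) (phv x v) v := by
  have h2 : HasDerivAt (fun w : ℝ => w * x ^ (-(1:ℝ)/3)) (1 * x ^ (-(1:ℝ)/3)) v :=
    (hasDerivAt_id v).mul_const _
  have h3 := ((Phi_deriv (v * x ^ (-(1:ℝ)/3))).comp v h2).const_mul (x ^ ((1:ℝ)/6))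
  have e : (fun w => phi0 x w) = fun w => x ^ ((1:ℝ)/6) * (Phi ∘ fun w => w * x ^ (-(1:ℝ)/3)) w := by
    funext w; rw [phi0_eq hx]; rfl
  rw [e]
  refine h3.congr_deriv ?_
  unfold phv
  have r2 : x ^ ((1:ℝ)/6) * x ^ (-(1:ℝ)/3) = x ^ (-(1:ℝ)/6) := by
    rw [← Real.rpow_add hx]; norm_num
  rw [← r2]; ring

/-- The equation `∂ᵥᵥφ₀ = v ∂ₓφ₀`. -/
lemma phv_deriv_v {x : ℝ} (hx : 0 < x) (v : ℝ) :
    HasDerivAt (fun w => phv x w) (v * phx x v) v := by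
  have h2 : HasDerivAt (fun w : ℝ => w * x ^ (-(1:ℝ)/3)) (1 * x ^ (-(1:ℝ)/3)) v :=
    (hasDerivAt_id v).mul_const _
  have h3 := ((Phi1_deriv (v * x ^ (-(1:ℝ)/3))).comp v h2).const_mul (x ^ (-(1:ℝ)/6))
  refine h3.congr_deriv ?_
  unfold phx
  have r2 : x ^ (-(1:ℝ)/6) * x ^ (-(1:ℝ)/3) * x ^ (-(1:ℝ)/3) = x ^ (-(5:ℝ)/6) := by
    rw [← Real.rpow_add hx, ← Real.rpow_add hx]; norm_num
  rw [← r2]; ring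

lemma phi0_continuousOn : ContinuousOn (fun p : P2 => phi0 p.1 p.2) (Ioi 0 ×ˢ univ) := by
  have hPhi : Continuous Phi := continuous_iff_continuousAt.2 fun s => (Phi_deriv s).continuousAt
  have : ContinuousOn (fun p : P2 => p.1 ^ ((1:ℝ)/6) * Phi (p.2 * p.1 ^ (-(1:ℝ)/3)))
      (Ioi 0 ×ˢ univ) := by
    have hr : ∀ r : ℝ, ContinuousOn (fun p : P2 => p.1 ^ r) (Ioi 0 ×ˢ univ) := fun r =>
      continuous_fst.continuousOn.rpow_const fun p hp => Or.inl (ne_of_gt hp.1)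
    exact (hr _).mul (hPhi.comp_continuousOn (continuous_snd.continuousOn.mul (hr _)))
  refine this.congr fun p hp => ?_
  exact phi0_eq hp.1 p.2

lemma phx_nonneg {x : ℝ} (hx : 0 < x) (v : ℝ) : 0 ≤ phx x v := by
  have := Phi_x_nonneg (v * x ^ (-(1:ℝ)/3))
  unfold phx
  positivity

lemma phi0_mono_x {x y : ℝ} (hx : 0 < x) (hxy : x ≤ y) (v : ℝ) : phi0 x v ≤ phi0 y v := by
  have hm : MonotoneOn (fun y => phi0 y v) (Ioi 0) := by
    refine monotoneOn_of_deriv_nonneg (convex_Ioi 0)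
      (fun z hz => (phi0_deriv_x hz v).continuousAt.continuousWithinAt) ?_ ?_
    · rw [interior_Ioi]
      exact fun z hz => (phi0_deriv_x hz v).differentiableAt.differentiableWithinAt
    · rw [interior_Ioi]
      intro z hz
      rw [(phi0_deriv_x hz v).deriv]; exact phx_nonneg hz v
  exact hm hx (lt_of_lt_of_le hx hxy) hxy

/-- The profile of `∂ₓφ₀` decays at `+∞` at least like `s^{-3}`; in fact it decays exponentially. -/
lemma Phi_x_bound : ∃ M : ℝ, ∀ s : ℝ, 1 ≤ s → s ^ 3 * (Phi s / 6 - s * Phi1 s / 3) ≤ M := by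
  set A := kum (-(1:ℝ)/6) (-(7:ℝ)/6) 0 with hA
  set B := kum (-(1:ℝ)/6) (-(1:ℝ)/6) (1/9) with hB
  have hG := G56_pos
  have hA0 : 0 < A := kum_pos_aux (kum_int' (by norm_num) (by norm_num) (by norm_num) le_rfl)
  have hB0 : 0 < B := kum_pos_aux (kum_int (by norm_num) (by norm_num) (by norm_num))
  refine ⟨1 / (6 * G56) * A * 9 + 1 / (18 * G56) * B * 162, fun s hs => ?_⟩
  have hs0 : 0 < s := by linarith
  have hs3 : 1 ≤ s ^ 3 := one_le_pow₀ hs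
  set z := s ^ 3 / 9 with hz
  have hz0 : 0 < z := by positivity
  have hk1 : kum (-(1:ℝ)/6) (-(7:ℝ)/6) z ≤ A :=
    kum_mono_aux hz0.le (kum_int' (by norm_num) (by norm_num) (by norm_num) le_rfl)
      (kum_int' (by norm_num) (by norm_num) (by norm_num) hz0.le)
  have hk2 : kum (-(1:ℝ)/6) (-(1:ℝ)/6) z ≤ B :=
    kum_mono_aux (by rw [hz]; linarith) (kum_int (by norm_num) (by norm_num) (by norm_num))
      (kum_int (by norm_num) (by norm_num) hz0)
  have hE : Real.exp (-(s ^ 3) / 9) = (Real.exp z)⁻¹ := by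
    rw [← Real.exp_neg, hz, neg_div]
  have he1 : z * (Real.exp z)⁻¹ ≤ 1 := by
    rw [← div_eq_mul_inv, div_le_one (Real.exp_pos _)]
    linarith [Real.add_one_le_exp z]
  have he2 : z ^ 2 * (Real.exp z)⁻¹ ≤ 2 := by
    rw [← div_eq_mul_inv, div_le_iff₀ (Real.exp_pos _)]
    have := Real.quadratic_le_exp_of_nonneg hz0.le
    nlinarith
  rw [Phi1_pos_s hs0, Phi_nonneg hs0.le, hE, ← hz]
  have hs9 : s ^ 3 = 9 * z := by rw [hz]; ring
  set e := (Real.exp z)⁻¹ with he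
  have he0 : 0 < e := by positivity
  set k1 := kum (-(1:ℝ)/6) (-(7:ℝ)/6) z
  set k2 := kum (-(1:ℝ)/6) (-(1:ℝ)/6) z
  have t1 : z * e * k1 ≤ A := by
    calc z * e * k1 ≤ z * e * A := by gcongr
      _ ≤ 1 * A := by gcongr
      _ = A := one_mul A
  have t2 : z ^ 2 * e * k2 ≤ 2 * B := by
    calc z ^ 2 * e * k2 ≤ z ^ 2 * e * B := by gcongr
      _ ≤ 2 * B := by gcongr
  have g1 : 0 < 1 / (6 * G56) := by positivity
  have g2 : 0 < 1 / (18 * G56) := by positivity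
  have eq : s ^ 3 * (1 / (6 * G56) * (e * k1) / 6 - s * (-(1 / (18 * G56)) * (s ^ 2 * (e * k2))) / 3)
      = 1 / (6 * G56) * ((z * e * k1) * (3/2)) + 1 / (18 * G56) * ((z ^ 2 * e * k2) * 27) := by
    have : s ^ 6 = 81 * z ^ 2 := by rw [show s ^ 6 = (s ^ 3) ^ 2 by ring, hs9]; ring
    linear_combination (1 / (6 * G56) * (e * k1) / 6) * hs9 + (1 / (18 * G56) * (e * k2) / 3) * this
  rw [eq]
  have u1 := mul_le_mul_of_nonneg_left t1 g1.le
  have u2 := mul_le_mul_of_nonneg_left t2 g2.le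
  have := mul_pos g1 hA0; have := mul_pos g2 hB0
  nlinarith

/-- On the line `v = 2`, away from the singular point `(0, 0)`, `∂ₓφ₀` stays bounded as `x → 0`. -/
lemma phx_two_bound : ∃ M : ℝ, 0 ≤ M ∧ ∀ x : ℝ, 0 < x → x ≤ 2 → phx x 2 ≤ M := by
  obtain ⟨M, hM⟩ := Phi_x_bound
  refine ⟨max M 0, le_max_right _ _, fun x hx hx2 => le_trans ?_ (le_max_left _ _)⟩
  set t := x ^ (-(1:ℝ)/3) with ht
  have ht0 : 0 < t := by positivity
  have ht3 : t ^ 3 = x⁻¹ := rpow_third_cube hx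
  have hs : 1 ≤ 2 * t := by
    by_contra h
    push Not at h
    have h1 : t < 1/2 := by linarith
    have h2 : t ^ 3 < (1/2) ^ 3 := by gcongr
    rw [ht3, inv_lt_iff_one_lt_mul₀ hx] at h2
    linarith
  have h6 : x ^ (-(5:ℝ)/6) ≤ (2 * t) ^ 3 := by
    have e1 : x ^ (-(5:ℝ)/6) = x ^ ((1:ℝ)/6) * x⁻¹ := by
      rw [← Real.rpow_neg_one, ← Real.rpow_add hx]; norm_num
    have e2 : x ^ ((1:ℝ)/6) ≤ 2 := by
      calc x ^ ((1:ℝ)/6) ≤ 2 ^ ((1:ℝ)/6) := by gcongr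
        _ ≤ 2 ^ (1:ℝ) := Real.rpow_le_rpow_of_exponent_le (by norm_num) (by norm_num)
        _ = 2 := Real.rpow_one 2
    rw [e1, mul_pow, ht3]
    have : 0 < x⁻¹ := by positivity
    nlinarith
  refine le_trans ?_ (hM (2 * t) hs)
  unfold phx
  rw [← ht]
  exact mul_le_mul_of_nonneg_right h6 (Phi_x_nonneg _)

/-- The exponential factor of `φ₀` for `v > 0` gives a uniform gap between `v ≤ 1` and `v = 2`,
so that subtracting `φ₀(x, 2)` from `φ₀(x, v)` costs only a constant factor. The exponent is
`7/9 = (2³ - 1³)/9`. -/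
lemma phi0_ratio {x v : ℝ} (hx : 0 < x) (hx1 : x ≤ 1) (hv : v ≤ 1) :
    phi0 x 2 ≤ Real.exp (-(7/9)) * phi0 x v := by
  refine le_trans ?_ (mul_le_mul_of_nonneg_left (phi0_anti hx hv) (Real.exp_pos _).le)
  rw [phi0_eq hx, phi0_eq hx]
  set t := x ^ (-(1:ℝ)/3) with ht
  have ht0 : 0 < t := by positivity
  have ht3 : t ^ 3 = x⁻¹ := rpow_third_cube hx
  have ht31 : 1 ≤ t ^ 3 := by rw [ht3]; exact (one_le_inv₀ hx).2 hx1
  have key : Phi (2 * t) ≤ Real.exp (-(7/9)) * Phi (1 * t) := by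
    rw [Phi_nonneg (by positivity), Phi_nonneg (by positivity), one_mul]
    have hk : kum (-(1:ℝ)/6) (-(7:ℝ)/6) ((2 * t) ^ 3 / 9)
        ≤ kum (-(1:ℝ)/6) (-(7:ℝ)/6) (t ^ 3 / 9) :=
      kum_mono_aux (by rw [mul_pow]; linarith)
        (kum_int' (by norm_num) (by norm_num) (by norm_num) (by positivity))
        (kum_int' (by norm_num) (by norm_num) (by norm_num) (by positivity))
    have hk0 := kum_pos_aux (kum_int' (a := -(1:ℝ)/6) (b := -(7:ℝ)/6) (z := t ^ 3 / 9)
      (by norm_num) (by norm_num) (by norm_num) (by positivity))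
    have hk1 := (kum_pos_aux (kum_int' (a := -(1:ℝ)/6) (b := -(7:ℝ)/6) (z := (2 * t) ^ 3 / 9)
      (by norm_num) (by norm_num) (by norm_num) (by positivity))).le
    have he : Real.exp (-((2 * t) ^ 3) / 9) ≤ Real.exp (-(7/9)) * Real.exp (-(t ^ 3) / 9) := by
      rw [← Real.exp_add]
      apply Real.exp_le_exp.2
      rw [mul_pow]; linarith
    have hG := G56_pos
    calc _ ≤ 1 / (6 * G56) * ((Real.exp (-(7/9)) * Real.exp (-(t ^ 3) / 9)) *
          kum (-(1:ℝ)/6) (-(7:ℝ)/6) (t ^ 3 / 9)) := by gcongr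
      _ = _ := by ring
  have hx6 : 0 < x ^ ((1:ℝ)/6) := by positivity
  nlinarith [mul_le_mul_of_nonneg_left key hx6.le]

lemma phi0_zero_v {x : ℝ} (hx : 0 < x) : phi0 x 0 = x ^ ((1:ℝ)/6) * Phi 0 := by
  rw [phi0_eq hx, zero_mul]

/-! ### Mollification of weak solutions -/

/-- Nonnegative mollifiers of mass one, supported in `[-s, s]`. -/
lemma exists_moll (s : ℝ) (hs : 0 < s) : ∃ α : ℝ → ℝ,
    ContDiff ℝ ((⊤ : ℕ∞) : WithTop ℕ∞) α ∧ HasCompactSupport α ∧ (∀ t, 0 ≤ α t) ∧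
    (∫ t, α t) = 1 ∧ tsupport α ⊆ Icc (-s) s := by
  let f : ContDiffBump (0:ℝ) := ⟨s / 2, s, by positivity, by linarith⟩
  refine ⟨f.normed volume, f.contDiff_normed, f.hasCompactSupport_normed,
    fun t => f.nonneg_normed t, f.integral_normed, ?_⟩
  rw [f.tsupport_normed_eq, Real.closedBall_eq_Icc]
  simp [f]

/-- Differentiation under the integral sign in one variable of a convolution. -/
lemma par_deriv {G : P2 → ℝ} (hG : Integrable G) {θ θ' : ℝ → ℝ} {ℓ η : P2 → ℝ} {C C' D : ℝ}
    (hθ : ∀ t, HasDerivAt θ (θ' t) t) (hC : ∀ t, ‖θ t‖ ≤ C) (hC' : ∀ t, ‖θ' t‖ ≤ C')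
    (hc : Continuous θ') (hℓ : Continuous ℓ) (hη : Continuous η) (hD : ∀ p, ‖η p‖ ≤ D) (t : ℝ) :
    HasDerivAt (fun t => ∫ p, G p * (θ (t - ℓ p) * η p)) (∫ p, G p * (θ' (t - ℓ p) * η p)) t := by
  have hθc : Continuous θ := continuous_iff_continuousAt.2 fun t => (hθ t).continuousAt
  have hC0 : 0 ≤ C := (norm_nonneg _).trans (hC 0)
  have hC0' : 0 ≤ C' := (norm_nonneg _).trans (hC' 0)
  have hm : ∀ t, AEStronglyMeasurable (fun p => θ (t - ℓ p) * η p) :=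
    fun t => Continuous.aestronglyMeasurable (by fun_prop)
  have hm' : ∀ t, AEStronglyMeasurable (fun p => θ' (t - ℓ p) * η p) :=
    fun t => Continuous.aestronglyMeasurable (by fun_prop)
  refine (hasDerivAt_integral_of_dominated_loc_of_deriv_le (s := univ)
    (F := fun t p => G p * (θ (t - ℓ p) * η p)) (F' := fun t p => G p * (θ' (t - ℓ p) * η p))
    (bound := fun p => ‖G p‖ * (C' * D)) univ_mem
    (Eventually.of_forall fun t => hG.aestronglyMeasurable.mul (hm t))
    ?_ (hG.aestronglyMeasurable.mul (hm' t)) ?_ (hG.norm.mul_const _) ?_).2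
  · refine hG.mul_bdd (c := C * D) (hm t) (Eventually.of_forall fun p => ?_)
    rw [norm_mul]
    exact mul_le_mul (hC _) (hD _) (norm_nonneg _) hC0
  · refine Eventually.of_forall fun p t _ => ?_
    rw [norm_mul, norm_mul]
    have := mul_le_mul (hC' (t - ℓ p)) (hD p) (norm_nonneg _) hC0'
    gcongr
  · refine Eventually.of_forall fun p t _ => ?_
    have h1 : HasDerivAt (fun t => t - ℓ p) 1 t := (hasDerivAt_id t).sub_const _
    have := (((hθ (t - ℓ p)).comp t h1).mul_const (η p)).const_mul (G p)
    simpa using this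

/-- The convolution of `G` with the tensor product kernel `(α ⊗ β)`. -/
def conv (G : P2 → ℝ) (α β : ℝ → ℝ) (x v : ℝ) : ℝ :=
  ∫ p, G p * (α (x - p.1) * β (v - p.2))

/-- Smooth functions of one variable with compact support. -/
def IsTest (α : ℝ → ℝ) : Prop :=
  ContDiff ℝ ((⊤ : ℕ∞) : WithTop ℕ∞) α ∧ HasCompactSupport α

lemma IsTest.deriv {α : ℝ → ℝ} (h : IsTest α) : IsTest (deriv α) :=
  ⟨(contDiff_infty_iff_deriv.1 h.1).2, h.2.deriv⟩

lemma IsTest.hasDerivAt {α : ℝ → ℝ} (h : IsTest α) (t : ℝ) : HasDerivAt α (_root_.deriv α t) t :=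
  ((contDiff_infty_iff_deriv.1 h.1).1 t).hasDerivAt

lemma IsTest.continuous {α : ℝ → ℝ} (h : IsTest α) : Continuous α := h.1.continuous

lemma IsTest.bound {α : ℝ → ℝ} (h : IsTest α) : ∃ C, ∀ t, ‖α t‖ ≤ C :=
  h.continuous.bounded_above_of_compact_support h.2

lemma conv_deriv_x {G : P2 → ℝ} (hG : Integrable G) {α β : ℝ → ℝ} (hα : IsTest α)
    (hβ : IsTest β) (x v : ℝ) :
    HasDerivAt (fun y => conv G α β y v) (conv G (deriv α) β x v) x := by
  obtain ⟨C, hC⟩ := hα.bound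
  obtain ⟨C', hC'⟩ := hα.deriv.bound
  obtain ⟨D, hD⟩ := hβ.bound
  have hb := hβ.continuous
  exact par_deriv hG (ℓ := fun p => p.1) (η := fun p => β (v - p.2)) hα.hasDerivAt hC hC'
    hα.deriv.continuous continuous_fst (by fun_prop) (fun p => hD _) x

lemma conv_deriv_v {G : P2 → ℝ} (hG : Integrable G) {α β : ℝ → ℝ} (hα : IsTest α)
    (hβ : IsTest β) (x v : ℝ) :
    HasDerivAt (fun w => conv G α β x w) (conv G α (deriv β) x v) v := by
  obtain ⟨C, hC⟩ := hβ.bound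
  obtain ⟨C', hC'⟩ := hβ.deriv.bound
  obtain ⟨D, hD⟩ := hα.bound
  have hb := hα.continuous
  have := par_deriv hG (ℓ := fun p => p.2) (η := fun p => α (x - p.1)) hβ.hasDerivAt hC hC'
    hβ.deriv.continuous continuous_snd (by fun_prop) (fun p => hD _) v
  simpa only [conv, mul_comm (α _)] using this

lemma conv_integrable {G : P2 → ℝ} (hG : Integrable G) {α β : ℝ → ℝ} (hα : IsTest α)
    (hβ : IsTest β) (x v : ℝ) : Integrable fun p => G p * (α (x - p.1) * β (v - p.2)) := by
  obtain ⟨C, hC⟩ := hα.bound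
  obtain ⟨D, hD⟩ := hβ.bound
  have ha := hα.continuous
  have hb := hβ.continuous
  refine hG.mul_bdd (c := C * D) (Continuous.aestronglyMeasurable (by fun_prop))
    (Eventually.of_forall fun p => ?_)
  rw [norm_mul]
  exact mul_le_mul (hC _) (hD _) (norm_nonneg _) ((norm_nonneg _).trans (hC 0))

lemma conv_continuous {G : P2 → ℝ} (hG : Integrable G) {α β : ℝ → ℝ} (hα : IsTest α)
    (hβ : IsTest β) : Continuous fun q : P2 => conv G α β q.1 q.2 := by
  obtain ⟨C, hC⟩ := hα.bound
  obtain ⟨D, hD⟩ := hβ.bound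
  have ha := hα.continuous
  have hb := hβ.continuous
  refine continuous_of_dominated (bound := fun p => ‖G p‖ * (C * D))
    (fun q => (conv_integrable hG hα hβ q.1 q.2).aestronglyMeasurable)
    (fun q => Eventually.of_forall fun p => ?_) (hG.norm.mul_const _)
    (Eventually.of_forall fun p => by fun_prop)
  rw [norm_mul, norm_mul]
  have := mul_le_mul (hC (q.1 - p.1)) (hD (q.2 - p.2)) (norm_nonneg _)
    ((norm_nonneg _).trans (hC 0))
  gcongr

/-- The tensor product test function centred at `(x, v)`. -/
def tens (α β : ℝ → ℝ) (x v : ℝ) (p : P2) : ℝ := α (x - p.1) * β (v - p.2)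

lemma tens_contDiff {α β : ℝ → ℝ} (hα : IsTest α) (hβ : IsTest β) (x v : ℝ) :
    ContDiff ℝ ((⊤ : ℕ∞) : WithTop ℕ∞) (tens α β x v) := by
  have h1 := hα.1
  have h2 := hβ.1
  unfold tens
  exact (h1.comp (by fun_prop)).mul (h2.comp (by fun_prop))

lemma tens_tsupport {α β : ℝ → ℝ} {s r : ℝ} (hα : tsupport α ⊆ Icc (-s) s)
    (hβ : tsupport β ⊆ Icc (-r) r) (x v : ℝ) :
    tsupport (tens α β x v) ⊆ Icc (x - s) (x + s) ×ˢ Icc (v - r) (v + r) := by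
  refine closure_minimal (fun p hp => ?_) (isClosed_Icc.prod isClosed_Icc)
  have h1 : α (x - p.1) ≠ 0 := left_ne_zero_of_mul hp
  have h2 : β (v - p.2) ≠ 0 := right_ne_zero_of_mul hp
  have h3 := hα (subset_tsupport _ h1)
  have h4 := hβ (subset_tsupport _ h2)
  simp only [mem_Icc, mem_prod] at *
  refine ⟨⟨?_, ?_⟩, ?_, ?_⟩ <;> linarith

lemma tens_hasCompactSupport {α β : ℝ → ℝ} {s r : ℝ} (hα : tsupport α ⊆ Icc (-s) s)
    (hβ : tsupport β ⊆ Icc (-r) r) (x v : ℝ) : HasCompactSupport (tens α β x v) :=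
  (isCompact_Icc.prod isCompact_Icc).of_isClosed_subset (isClosed_tsupport _)
    (tens_tsupport hα hβ x v)

lemma tens_fderiv {α β : ℝ → ℝ} (hα : IsTest α) (hβ : IsTest β) (x v : ℝ) (p : P2) (e : P2) :
    fderiv ℝ (tens α β x v) p e =
      -(e.1 * tens (deriv α) β x v p + e.2 * tens α (deriv β) x v p) := by
  have h1 : HasFDerivAt (fun p : P2 => x - p.1) (-(ContinuousLinearMap.fst ℝ ℝ ℝ)) p :=
    (ContinuousLinearMap.fst ℝ ℝ ℝ).hasFDerivAt.const_sub x
  have h2 : HasFDerivAt (fun p : P2 => v - p.2) (-(ContinuousLinearMap.snd ℝ ℝ ℝ)) p :=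
    (ContinuousLinearMap.snd ℝ ℝ ℝ).hasFDerivAt.const_sub v
  have h3 := (hα.hasDerivAt (x - p.1)).comp_hasFDerivAt p h1
  have h4 := (hβ.hasDerivAt (v - p.2)).comp_hasFDerivAt p h2
  have h5 := h3.mul h4
  have h6 : fderiv ℝ (tens α β x v) p = _ := h5.fderiv
  rw [h6]
  simp [tens]
  ring

/-- Testing the weak formulation with a tensor product supported in the interior, and moving the
remaining `v`-derivative off `hv`. The boundary condition plays no role here. -/
lemma weak_tens {h hv : P2 → ℝ} (hw : IsWeakSolRect 4 h hv) {α β : ℝ → ℝ} (hα : IsTest α)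
    (hβ : IsTest β) {s r : ℝ} (hαs : tsupport α ⊆ Icc (-s) s) (hβr : tsupport β ⊆ Icc (-r) r)
    {x v : ℝ} (hK : Icc (x - s) (x + s) ×ˢ Icc (v - r) (v + r) ⊆ Hrect 4) :
    (∫ p in Hrect 4, h p * (p.2 * tens (deriv α) β x v p)) =
      ∫ p in Hrect 4, h p * tens α (deriv (deriv β)) x v p := by
  obtain ⟨-, -, h1, h2⟩ := hw
  have hβr' : tsupport (deriv β) ⊆ Icc (-r) r := tsupport_deriv_subset.trans hβr
  have e1 := h1 _ (tens_contDiff hα hβ.deriv x v) (tens_hasCompactSupport hαs hβr' x v)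
    ((tens_tsupport hαs hβr' x v).trans hK)
  have hsub := (tens_tsupport hαs hβr x v).trans hK
  have e2 := h2 _ (tens_contDiff hα hβ x v) (tens_hasCompactSupport hαs hβr x v)
    (hsub.trans (prod_mono Ioo_subset_Ico_self le_rfl)) (by
      rintro p ⟨hp, hp0⟩
      exact absurd hp0 (hsub hp).1.1.ne')
  simp only [tens_fderiv hα hβ, tens_fderiv hα hβ.deriv, zero_mul, one_mul, zero_add, add_zero,
    mul_neg, integral_neg] at e1 e2
  linarith

/-- Continuous weak solutions are locally uniform limits of smooth functions `H` for which
`v ∂ₓ H − ∂ᵥᵥ H` tends to zero uniformly. The mollification scale in `v` is chosen after the one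
in `x`, so that the commutator with the coefficient `v` is small. -/
lemma approx {h hv : P2 → ℝ} (hw : IsWeakSolRect 4 h hv) (hc : ContinuousOn h (Hrect 4))
    {x0 x1 a b : ℝ} (hx0 : 0 < x0) (hx1 : x1 < 64) (ha : -4 < a) (hb : b < 4) {ε d : ℝ}
    (hε : 0 < ε) (hd : 0 < d) : ∃ H Hx Hv Hvv : ℝ → ℝ → ℝ,
      (Continuous fun p : P2 => H p.1 p.2) ∧
      (∀ x v, HasDerivAt (fun y => H y v) (Hx x v) x) ∧
      (∀ x v, HasDerivAt (fun w => H x w) (Hv x v) v) ∧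
      (∀ x v, HasDerivAt (fun w => Hv x w) (Hvv x v) v) ∧
      ∀ x ∈ Icc x0 x1, ∀ v ∈ Icc a b, |H x v - h (x, v)| ≤ d ∧ |v * Hx x v - Hvv x v| ≤ ε := by
  obtain ⟨σ, hσ, hσ1, hσ2, hσ3, hσ4⟩ : ∃ σ, 0 < σ ∧ σ < x0 ∧ σ < 64 - x1 ∧ σ < a + 4 ∧ σ < 4 - b := by
    refine ⟨min (min x0 (64 - x1)) (min (a + 4) (4 - b)) / 2, ?_, ?_⟩
    · have : 0 < min (min x0 (64 - x1)) (min (a + 4) (4 - b)) := by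
        refine lt_min (lt_min hx0 ?_) (lt_min ?_ ?_) <;> linarith
      linarith
    · have hp : 0 < min (min x0 (64 - x1)) (min (a + 4) (4 - b)) := by
        refine lt_min (lt_min hx0 ?_) (lt_min ?_ ?_) <;> linarith
      have h1 := min_le_left (min x0 (64 - x1)) (min (a + 4) (4 - b))
      have h2 := min_le_right (min x0 (64 - x1)) (min (a + 4) (4 - b))
      have h3 := min_le_left x0 (64 - x1)
      have h4 := min_le_right x0 (64 - x1)
      have h5 := min_le_left (a + 4) (4 - b)
      have h6 := min_le_right (a + 4) (4 - b)
      refine ⟨?_, ?_, ?_, ?_⟩ <;> linarith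
  set K : Set P2 := Icc (x0 - σ) (x1 + σ) ×ˢ Icc (a - σ) (b + σ) with hKdef
  have hKc : IsCompact K := isCompact_Icc.prod isCompact_Icc
  have hKH : K ⊆ Hrect 4 := by
    rintro p ⟨⟨h1, h2⟩, h3, h4⟩
    refine ⟨⟨?_, ?_⟩, ?_, ?_⟩ <;> norm_num <;> linarith
  have hcK := hc.mono hKH
  obtain ⟨M, hM⟩ := hKc.exists_bound_of_continuousOn hcK
  have hM1 : ∀ p ∈ K, ‖h p‖ ≤ |M| := fun p hp => (hM p hp).trans (le_abs_self M)
  obtain ⟨ω, hω, hunif⟩ := Metric.uniformContinuousOn_iff.1 (hKc.uniformContinuousOn_of_continuous hcK) d hd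
  set G : P2 → ℝ := K.indicator h with hGdef
  have hKm : MeasurableSet K := hKc.measurableSet
  have hG : Integrable G := (integrable_indicator_iff hKm).2 (hcK.integrableOn_compact hKc)
  have hGb : ∀ p, ‖G p‖ ≤ |M| := fun p => by
    by_cases hp : p ∈ K
    · rw [hGdef, indicator_of_mem hp]; exact hM1 p hp
    · rw [hGdef, indicator_of_notMem hp]; simp
  set s := min σ (ω / 2) with hs
  have hs0 : 0 < s := lt_min hσ (by linarith)
  obtain ⟨α, hα1, hα2, hα3, hα4, hα5⟩ := exists_moll s hs0
  have hα : IsTest α := ⟨hα1, hα2⟩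
  set A := ∫ t, |deriv α t| with hA
  have hA0 : 0 ≤ A := integral_nonneg fun _ => abs_nonneg _
  have hq : 0 < |M| * A + 1 := by positivity
  set r := min s (ε / (|M| * A + 1)) with hr
  have hr0 : 0 < r := lt_min hs0 (by positivity)
  obtain ⟨β, hβ1, hβ2, hβ3, hβ4, hβ5⟩ := exists_moll r hr0
  have hβ : IsTest β := ⟨hβ1, hβ2⟩
  have hsσ : s ≤ σ := min_le_left _ _
  have hsω : s ≤ ω / 2 := min_le_right _ _
  have hrs : r ≤ s := min_le_left _ _
  have hrε : |M| * r * A ≤ ε := by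
    have h1 : r * (|M| * A + 1) ≤ ε := by
      rw [← le_div_iff₀ hq]; exact min_le_right _ _
    nlinarith
  refine ⟨conv G α β, conv G (deriv α) β, conv G α (deriv β), conv G α (deriv (deriv β)),
    conv_continuous hG hα hβ, conv_deriv_x hG hα hβ, conv_deriv_v hG hα hβ,
    conv_deriv_v hG hα hβ.deriv, fun x hx v hv' => ?_⟩
  have hbox : Icc (x - s) (x + s) ×ˢ Icc (v - r) (v + r) ⊆ K := by
    rintro p ⟨⟨h1, h2⟩, h3, h4⟩
    obtain ⟨h5, h6⟩ := hx
    obtain ⟨h7, h8⟩ := hv'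
    refine ⟨⟨?_, ?_⟩, ?_, ?_⟩ <;> linarith
  have hαs' : tsupport (deriv α) ⊆ Icc (-s) s := tsupport_deriv_subset.trans hα5
  have hβr' : tsupport (deriv (deriv β)) ⊆ Icc (-r) r :=
    tsupport_deriv_subset.trans (tsupport_deriv_subset.trans hβ5)
  -- integrals over the box of functions supported in `K` agree with integrals of `G`
  have hloc : ∀ X : P2 → ℝ, (∀ p, p ∉ K → X p = 0) →
      (∫ p in Hrect 4, h p * X p) = ∫ p, G p * X p := by
    intro X hX
    have hHm : MeasurableSet (Hrect 4) := measurableSet_Ioo.prod measurableSet_Ioo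
    rw [← integral_indicator hHm]
    congr 1
    funext p
    by_cases hp : p ∈ K
    · rw [indicator_of_mem (hKH hp), hGdef, indicator_of_mem hp]
    · rw [hGdef, indicator_of_notMem hp, zero_mul]
      by_cases hp' : p ∈ Hrect 4
      · rw [indicator_of_mem hp', hX p hp, mul_zero]
      · rw [indicator_of_notMem hp']
  have hz : ∀ α' β' : ℝ → ℝ, tsupport α' ⊆ Icc (-s) s → tsupport β' ⊆ Icc (-r) r →
      ∀ p, p ∉ Icc (x - s) (x + s) ×ˢ Icc (v - r) (v + r) → tens α' β' x v p = 0 := by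
    intro α' β' h1 h2 p hp
    exact image_eq_zero_of_notMem_tsupport fun h3 => hp (tens_tsupport h1 h2 x v h3)
  have hmass : ∀ f : ℝ → ℝ, (∫ p : P2, f (x - p.1) * β (v - p.2)) = ∫ t, f t := by
    intro f
    have := integral_prod_mul (μ := (volume : Measure ℝ)) (ν := (volume : Measure ℝ))
      (fun t => f (x - t)) (fun t => β (v - t))
    rw [integral_sub_left_eq_self f, integral_sub_left_eq_self β, hβ4, mul_one] at this
    exact this
  have hInteg : ∀ f : ℝ → ℝ, Continuous f → HasCompactSupport f →
      Integrable fun p : P2 => f (x - p.1) * β (v - p.2) := by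
    intro f hf hf'
    exact ((hf.integrable_of_hasCompactSupport hf').comp_sub_left x).mul_prod
      ((hβ.continuous.integrable_of_hasCompactSupport hβ.2).comp_sub_left v)
  constructor
  · have hi := hInteg α hα.continuous hα.2
    have e1 : conv G α β x v - h (x, v) = ∫ p, (G p - h (x, v)) * (α (x - p.1) * β (v - p.2)) := by
      have := hmass α
      simp_rw [sub_mul]
      rw [integral_sub (conv_integrable hG hα hβ x v) (hi.const_mul _), integral_const_mul, hmass,
        hα4, mul_one]
      rfl
    rw [e1, ← Real.norm_eq_abs]
    have hle := norm_integral_le_of_norm_le (μ := (volume : Measure P2))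
      (f := fun p : P2 => (G p - h (x, v)) * (α (x - p.1) * β (v - p.2))) (hi.const_mul d)
      (Eventually.of_forall fun p => ?_)
    · rwa [integral_const_mul, hmass, hα4, mul_one] at hle
    · by_cases hp : p ∈ Icc (x - s) (x + s) ×ˢ Icc (v - r) (v + r)
      · rw [norm_mul, Real.norm_of_nonneg (mul_nonneg (hα3 _) (hβ3 _))]
        refine mul_le_mul_of_nonneg_right ?_ (mul_nonneg (hα3 _) (hβ3 _))
        rw [hGdef, indicator_of_mem (hbox hp), ← dist_eq_norm]
        refine (hunif p (hbox hp) (x, v) ?_ ?_).le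
        · exact hbox ⟨⟨by simp [hs0.le], by simp [hs0.le]⟩, by simp [hr0.le], by simp [hr0.le]⟩
        · obtain ⟨⟨h1, h2⟩, h3, h4⟩ := hp
          rw [Prod.dist_eq, max_lt_iff, Real.dist_eq, Real.dist_eq, abs_lt, abs_lt]
          refine ⟨⟨?_, ?_⟩, ?_, ?_⟩ <;> simp only <;> linarith
      · have := hz α β hα5 hβ5 p hp
        unfold tens at this
        simp [this]
  · have e0 := weak_tens hw hα hβ hα5 hβ5 (hbox.trans hKH)
    rw [hloc _ fun p hp => hz _ _ hα5 hβr' p fun h' => hp (hbox h'),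
      hloc _ fun p hp => by rw [hz _ _ hαs' hβ5 p fun h' => hp (hbox h'), mul_zero]] at e0
    have hi := hInteg (fun t => |deriv α t|) hα.deriv.continuous.abs hα.deriv.2.abs
    have hbd : ∀ p : P2, ‖G p * ((v - p.2) * tens (deriv α) β x v p)‖ ≤
        (|M| * r) * (|deriv α (x - p.1)| * β (v - p.2)) := by
      intro p
      have hR : 0 ≤ |deriv α (x - p.1)| * β (v - p.2) := mul_nonneg (abs_nonneg _) (hβ3 _)
      by_cases hp : p ∈ Icc (x - s) (x + s) ×ˢ Icc (v - r) (v + r)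
      · rw [norm_mul, norm_mul, mul_assoc]
        have e : ‖tens (deriv α) β x v p‖ = |deriv α (x - p.1)| * β (v - p.2) := by
          rw [tens, norm_mul, Real.norm_of_nonneg (hβ3 _), Real.norm_eq_abs]
        rw [e]
        have h1 : ‖v - p.2‖ ≤ r := by
          obtain ⟨-, h3, h4⟩ := hp
          rw [Real.norm_eq_abs, abs_le]
          constructor <;> linarith
        have h2 := hGb p
        gcongr
      · rw [hz _ _ hαs' hβ5 p hp]
        simp only [mul_zero, norm_zero]
        positivity
    have hi1 := conv_integrable hG hα.deriv hβ x v
    have hm2 : AEStronglyMeasurable (fun p : P2 => G p * ((v - p.2) * tens (deriv α) β x v p)) := by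
      refine hG.aestronglyMeasurable.mul (Continuous.aestronglyMeasurable ?_)
      have := (tens_contDiff hα.deriv hβ x v).continuous
      fun_prop
    have hi2 : Integrable (fun p : P2 => G p * ((v - p.2) * tens (deriv α) β x v p)) :=
      (hi.const_mul (|M| * r)).mono' hm2 (Eventually.of_forall hbd)
    have e1 : v * conv G (deriv α) β x v - conv G α (deriv (deriv β)) x v =
        ∫ p, G p * ((v - p.2) * tens (deriv α) β x v p) := by
      have e2 : conv G α (deriv (deriv β)) x v = ∫ p, G p * tens α (deriv (deriv β)) x v p := rfl
      have e3 : (∫ p, G p * (p.2 * tens (deriv α) β x v p)) =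
          ∫ p, (v * (G p * (deriv α (x - p.1) * β (v - p.2))) -
            G p * ((v - p.2) * tens (deriv α) β x v p)) := by
        congr 1
        funext p
        unfold tens
        ring
      rw [integral_sub (hi1.const_mul v) hi2, integral_const_mul] at e3
      rw [e2, ← e0, e3]
      unfold conv
      ring
    rw [e1, ← Real.norm_eq_abs]
    refine (norm_integral_le_of_norm_le (hi.const_mul (|M| * r)) (Eventually.of_forall hbd)).trans ?_
    rw [integral_const_mul, hmass fun t => |deriv α t|]
    exact hrε

/-! ### The comparison principle -/

/-- The second derivative is nonnegative at an interior minimum. -/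
lemma second_deriv_nonneg {f f' : ℝ → ℝ} {f'' t a b : ℝ} (ht : t ∈ Ioo a b)
    (h1 : ∀ y ∈ Ioo a b, HasDerivAt f (f' y) y) (h2 : HasDerivAt f' f'' t)
    (hmin : ∀ y ∈ Ioo a b, f t ≤ f y) : 0 ≤ f'' := by
  have hmem : Ioo a b ∈ 𝓝 t := Ioo_mem_nhds ht.1 ht.2
  have hlm : IsLocalMin f t := by filter_upwards [hmem] with y hy using hmin y hy
  have hde : deriv f =ᶠ[𝓝 t] f' := by filter_upwards [hmem] with y hy using (h1 y hy).deriv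
  by_contra hneg
  push Not at hneg
  have hd2 : deriv (deriv f) t = f'' := by rw [hde.deriv_eq, h2.deriv]
  have hlM : IsLocalMax f t := isLocalMax_of_deriv_deriv_neg (by rw [hd2]; exact hneg)
    hlm.deriv_eq_zero (h1 t ht).continuousAt
  have hconst : f =ᶠ[𝓝 t] fun _ => f t := by
    filter_upwards [hlm, hlM] with y h3 h4 using le_antisymm h4 h3
  have h5 := hconst.deriv.deriv_eq
  rw [hd2] at h5
  simp at h5
  linarith

lemma deriv_nonneg_left {f : ℝ → ℝ} {f' t b : ℝ} (htb : t < b) (h1 : HasDerivAt f f' t)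
    (hmin : ∀ y ∈ Ioo t b, f t ≤ f y) : 0 ≤ f' := by
  have h2 : Tendsto (slope f t) (𝓝[>] t) (𝓝 f') :=
    (hasDerivAt_iff_tendsto_slope.1 h1).mono_left (nhdsWithin_mono _ fun y hy => ne_of_gt hy)
  refine ge_of_tendsto h2 ?_
  filter_upwards [Ioo_mem_nhdsGT htb] with y hy
  rw [slope_def_field]
  exact div_nonneg (sub_nonneg.2 (hmin y hy)) (sub_nonneg.2 hy.1.le)

lemma deriv_nonpos_right {f : ℝ → ℝ} {f' t a : ℝ} (hat : a < t) (h1 : HasDerivAt f f' t)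
    (hmin : ∀ y ∈ Ioo a t, f t ≤ f y) : f' ≤ 0 := by
  have h2 : Tendsto (slope f t) (𝓝[<] t) (𝓝 f') :=
    (hasDerivAt_iff_tendsto_slope.1 h1).mono_left (nhdsWithin_mono _ fun y hy => ne_of_lt hy)
  refine le_of_tendsto h2 ?_
  filter_upwards [Ioo_mem_nhdsLT hat] with y hy
  rw [slope_def_field]
  exact div_nonpos_of_nonneg_of_nonpos (sub_nonneg.2 (hmin y hy)) (sub_nonpos.2 hy.2.le)

/-- Comparison principle for continuous weak solutions against classical subsolutions. The
boundary inequality is only needed on the lateral sides and on the incoming parts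
`{x₀} × [0, b]` and `{x₁} × [a, 0]`. -/
lemma comparison {h hv : P2 → ℝ} (hw : IsWeakSolRect 4 h hv) (hc : ContinuousOn h (Hrect 4))
    {x0 x1 a b : ℝ} (hx0 : 0 < x0) (hx : x0 < x1) (hx1 : x1 < 64) (ha : -4 < a) (hb : b < 4)
    {W Wx Wv Wvv : ℝ → ℝ → ℝ}
    (hWc : ContinuousOn (fun p : P2 => W p.1 p.2) (Icc x0 x1 ×ˢ Icc a b))
    (hWx : ∀ x ∈ Icc x0 x1, ∀ v ∈ Ioo a b, HasDerivAt (fun y => W y v) (Wx x v) x)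
    (hWv : ∀ x ∈ Icc x0 x1, ∀ v ∈ Ioo a b, HasDerivAt (fun w => W x w) (Wv x v) v)
    (hWvv : ∀ x ∈ Icc x0 x1, ∀ v ∈ Ioo a b, HasDerivAt (fun w => Wv x w) (Wvv x v) v)
    (hsub : ∀ x ∈ Icc x0 x1, ∀ v ∈ Ioo a b, v * Wx x v - Wvv x v ≤ 0)
    (hba : ∀ x ∈ Icc x0 x1, W x a ≤ h (x, a)) (hbb : ∀ x ∈ Icc x0 x1, W x b ≤ h (x, b))
    (hin : ∀ v ∈ Icc a b, 0 ≤ v → W x0 v ≤ h (x0, v))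
    (hout : ∀ v ∈ Icc a b, v ≤ 0 → W x1 v ≤ h (x1, v)) :
    ∀ x ∈ Icc x0 x1, ∀ v ∈ Icc a b, W x v ≤ h (x, v) := by
  intro xp hxp vp hvp
  by_contra hcon
  push Not at hcon
  set d := W xp vp - h (xp, vp) with hd
  have hd0 : 0 < d := sub_pos.2 hcon
  set ε := d / 64 with hε
  have hε0 : 0 < ε := by positivity
  obtain ⟨H, Hx, Hv, Hvv, hHc, hHx, hHv, hHvv, hH⟩ :=
    approx hw hc hx0 hx1 ha hb hε0 (show 0 < d / 8 by positivity)
  set u : ℝ → ℝ → ℝ := fun x v => H x v - (W x v + ε * (v ^ 2 - 16)) with hu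
  set K : Set P2 := Icc x0 x1 ×ˢ Icc a b with hK
  have huc : ContinuousOn (fun p : P2 => u p.1 p.2) K := by
    refine hHc.continuousOn.sub (hWc.add (Continuous.continuousOn ?_))
    fun_prop
  obtain ⟨⟨x, v⟩, ⟨hxm, hvm⟩, hmin⟩ := (isCompact_Icc.prod isCompact_Icc).exists_isMinOn
    (⟨(xp, vp), hxp, hvp⟩ : K.Nonempty) huc
  simp only at hxm hvm
  have hmin' : ∀ y ∈ Icc x0 x1, ∀ w ∈ Icc a b, u x v ≤ u y w := fun y hy w hw' =>
    hmin (show (y, w) ∈ K from ⟨hy, hw'⟩)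
  have hv16 : ∀ w ∈ Icc a b, w ^ 2 ≤ 16 := fun w hw' => by
    have h1 : -4 ≤ w := ha.le.trans hw'.1
    have h2 : w ≤ 4 := hw'.2.trans hb.le
    nlinarith
  -- `u < -d/8` at its minimum, whereas `u ≥ -d/8` wherever `W ≤ h`; so the minimum avoids the
  -- part of the boundary where the comparison is assumed
  have hlow : u x v < -(d / 8) := by
    have h1 := hmin' xp hxp vp hvp
    have h2 := (abs_le.1 (hH xp hxp vp hvp).1).2
    have h3 : 0 ≤ ε * vp ^ 2 := by positivity
    have h4 : u xp vp = H xp vp - W xp vp - ε * vp ^ 2 + 16 * ε := by simp only [hu]; ring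
    have h5 : H xp vp - W xp vp ≤ d / 8 - d := by linarith
    linarith
  have hnb : ¬ W x v ≤ h (x, v) := by
    intro h1
    have h2 := (abs_le.1 (hH x hxm v hvm).1).1
    have h3 : ε * (v ^ 2 - 16) ≤ 0 :=
      mul_nonpos_of_nonneg_of_nonpos hε0.le (by linarith [hv16 v hvm])
    have h4 : u x v = H x v - (W x v + ε * (v ^ 2 - 16)) := rfl
    linarith
  have hva : a < v := lt_of_le_of_ne hvm.1 fun e => hnb (by rw [← e]; exact hba x hxm)
  have hvb : v < b := lt_of_le_of_ne hvm.2 fun e => hnb (by rw [e]; exact hbb x hxm)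
  have hvo : v ∈ Ioo a b := ⟨hva, hvb⟩
  have hux : HasDerivAt (fun y => u y v) (Hx x v - Wx x v) x :=
    (hHx x v).sub ((hWx x hxm v hvo).add_const _)
  have hsq : ∀ w : ℝ, HasDerivAt (fun w : ℝ => ε * (w ^ 2 - 16)) (ε * (2 * w)) w := fun w => by
    have := ((hasDerivAt_pow 2 w).sub_const 16).const_mul ε
    simpa using this
  have huv : ∀ w ∈ Ioo a b, HasDerivAt (fun w => u x w) (Hv x w - (Wv x w + ε * (2 * w))) w :=
    fun w hw' => (hHv x w).sub ((hWv x hxm w hw').add (hsq w))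
  have huvv : HasDerivAt (fun w => Hv x w - (Wv x w + ε * (2 * w)))
      (Hvv x v - (Wvv x v + ε * 2)) v := by
    refine (hHvv x v).sub ((hWvv x hxm v hvo).add ?_)
    have := ((hasDerivAt_id v).const_mul 2).const_mul ε
    simpa using this
  have h2 : 0 ≤ Hvv x v - (Wvv x v + ε * 2) :=
    second_deriv_nonneg hvo huv huvv fun w hw' => hmin' x hxm w (Ioo_subset_Icc_self hw')
  have h1 : v * (Hx x v - Wx x v) ≤ 0 := by
    rcases eq_or_lt_of_le hxm.1 with e | hl
    · have hvneg : v < 0 := by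
        by_contra h'
        push Not at h'
        exact hnb (by rw [← e]; exact hin v hvm h')
      have hlt : x < x1 := e ▸ hx
      have := deriv_nonneg_left hlt hux fun y hy =>
        hmin' y ⟨hxm.1.trans hy.1.le, hy.2.le⟩ v hvm
      exact mul_nonpos_of_nonpos_of_nonneg hvneg.le this
    · have hr := deriv_nonpos_right hl hux fun y hy =>
        hmin' y ⟨hy.1.le, hy.2.le.trans hxm.2⟩ v hvm
      rcases eq_or_lt_of_le hxm.2 with e' | hl'
      · have hvpos : 0 < v := by
          by_contra h'
          push Not at h'
          exact hnb (by rw [e']; exact hout v hvm h')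
        exact mul_nonpos_of_nonneg_of_nonpos hvpos.le hr
      · have hl2 := deriv_nonneg_left hl' hux fun y hy =>
          hmin' y ⟨hxm.1.trans hy.1.le, hy.2.le⟩ v hvm
        rw [le_antisymm hr hl2, mul_zero]
  -- the term `ε v²` contributes `2ε` to `v ∂ₓu - ∂ᵥᵥu`, more than the error `ε` of the
  -- mollification, so this quantity is positive, against the two signs at the minimum
  have h3 := (abs_le.1 (hH x hxm v hvm).2).1
  have h4 := hsub x hxm v hvo
  nlinarith

/-! ### Barriers -/

/-- Propagation of a lower bound from `x = 2` down to `x = 0` along the line `v = -1`, where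
information travels in the direction of decreasing `x`. The barrier is
`16 μ e^{40 (x - 2)} (1/4 - (v + 1)²)²`. -/
lemma lower_left {h hv : P2 → ℝ} (hw : IsWeakSolRect 4 h hv) (hc : ContinuousOn h (Hrect 4))
    (h0 : ∀ p ∈ Hrect 4, 0 ≤ h p) {μ : ℝ} (hμ : 0 ≤ μ)
    (hμ2 : ∀ v ∈ Icc (-(3:ℝ)/2) (-(1:ℝ)/2), μ ≤ h (2, v)) {x : ℝ} (hx : 0 < x) (hx2 : x ≤ 2) :
    μ * Real.exp (-80) ≤ h (x, -1) := by
  have hpos : ∀ y ∈ Icc (x / 2) 2, ∀ v ∈ Icc (-(3:ℝ)/2) (-(1:ℝ)/2), 0 ≤ h (y, v) := by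
    intro y hy v hv'
    refine h0 _ ⟨⟨?_, ?_⟩, ?_, ?_⟩ <;> norm_num <;> linarith [hy.1, hy.2, hv'.1, hv'.2]
  have key := comparison hw hc (x0 := x / 2) (x1 := 2) (a := -(3:ℝ)/2) (b := -(1:ℝ)/2)
    (by positivity) (by linarith) (by norm_num) (by norm_num) (by norm_num)
    (W := fun y v => 16 * μ * Real.exp (40 * (y - 2)) * (1/4 - (v + 1) ^ 2) ^ 2)
    (Wx := fun y v => 40 * (16 * μ * Real.exp (40 * (y - 2)) * (1/4 - (v + 1) ^ 2) ^ 2))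
    (Wv := fun y v => 16 * μ * Real.exp (40 * (y - 2)) * (-4 * (v + 1) * (1/4 - (v + 1) ^ 2)))
    (Wvv := fun y v => 16 * μ * Real.exp (40 * (y - 2)) * (2 - 12 * (1/4 - (v + 1) ^ 2)))
    (Continuous.continuousOn (by fun_prop)) ?_ ?_ ?_ ?_ ?_ ?_ ?_ ?_ x ⟨by linarith, hx2⟩ (-1)
    ⟨by norm_num, by norm_num⟩
  · refine le_trans ?_ key
    have : Real.exp (-80) ≤ Real.exp (40 * (x - 2)) := Real.exp_le_exp.2 (by linarith)
    have := mul_le_mul_of_nonneg_left this hμ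
    norm_num
    linarith
  · intro y _ v _
    have h1 : HasDerivAt (fun y : ℝ => 40 * (y - 2)) (40 * 1) y :=
      ((hasDerivAt_id y).sub_const 2).const_mul 40
    exact ((h1.exp.const_mul (16 * μ)).mul_const ((1/4 - (v + 1) ^ 2) ^ 2)).congr_deriv (by ring)
  · intro y _ v _
    have h1 : HasDerivAt (fun v : ℝ => v + 1) 1 v := (hasDerivAt_id v).add_const 1
    refine ((((h1.pow 2).const_sub (1/4)).pow 2).const_mul
      (16 * μ * Real.exp (40 * (y - 2)))).congr_deriv ?_
    simp
    left; ring
  · intro y _ v _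
    have h1 : HasDerivAt (fun v : ℝ => v + 1) 1 v := (hasDerivAt_id v).add_const 1
    refine (((h1.const_mul (-4)).mul ((h1.pow 2).const_sub (1/4))).const_mul
      (16 * μ * Real.exp (40 * (y - 2)))).congr_deriv ?_
    simp
    left; ring
  · intro y _ v hv'
    have hE : 0 ≤ 16 * μ * Real.exp (40 * (y - 2)) := by positivity
    set q := 1/4 - (v + 1) ^ 2 with hq
    have hv2 := hv'.2
    -- `20 q² - 12 q + 2` has negative discriminant
    have h1 : 40 * v * q ^ 2 - (2 - 12 * q) ≤ 0 := by
      nlinarith [sq_nonneg q, sq_nonneg (q - 3/10), mul_nonneg (sq_nonneg q) (by linarith : 0 ≤ -1/2 - v)]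
    nlinarith [mul_nonpos_of_nonneg_of_nonpos hE h1]
  · intro y hy
    norm_num
    convert hpos y hy (-(3:ℝ)/2) ⟨le_rfl, by norm_num⟩ using 3
    norm_num
  · intro y hy
    norm_num
    convert hpos y hy (-(1:ℝ)/2) ⟨by norm_num, le_rfl⟩ using 3
    norm_num
  · intro v hv' hv0
    linarith [hv'.2]
  · intro v hv' _
    refine le_trans ?_ (hμ2 v hv')
    simp only [sub_self, mul_zero, Real.exp_zero, mul_one]
    have h1 : (1/4 - (v + 1) ^ 2) ^ 2 ≤ 1/16 := by
      have := hv'.1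
      have := hv'.2
      have h2 : (v + 1) ^ 2 ≤ 1/4 := by nlinarith
      nlinarith [sq_nonneg (v + 1)]
    nlinarith

/-- Powers at least `2` of the negative part are differentiable, also at the origin. -/
lemma negPart_pow_deriv (n : ℕ) (v : ℝ) : HasDerivAt (fun v : ℝ => max (-v) 0 ^ (n + 2))
    (-((n + 2 : ℕ) : ℝ) * max (-v) 0 ^ (n + 1)) v := by
  rcases lt_trichotomy v 0 with hv | rfl | hv
  · have h1 : HasDerivAt (fun v : ℝ => (-v) ^ (n + 2)) (-((n + 2 : ℕ) : ℝ) * (-v) ^ (n + 1)) v :=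
      ((hasDerivAt_neg v).pow (n + 2)).congr_deriv (by simp; ring)
    rw [max_eq_left (by linarith)]
    refine h1.congr_of_eventuallyEq ?_
    filter_upwards [Iio_mem_nhds hv] with w hw
    rw [max_eq_left (by linarith [mem_Iio.1 hw])]
  · have h1 : HasDerivAt (fun v : ℝ => v ^ (n + 2)) 0 0 := by
      simpa using hasDerivAt_pow (n + 2) (0:ℝ)
    rw [neg_zero, max_self, zero_pow n.succ_ne_zero, mul_zero]
    rw [hasDerivAt_iff_isLittleO_nhds_zero] at h1 ⊢
    refine Asymptotics.IsBigO.trans_isLittleO (Asymptotics.IsBigO.of_bound 1 ?_) h1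
    refine Eventually.of_forall fun w => ?_
    have : ‖max (-w) 0‖ ≤ ‖w‖ := by
      rw [Real.norm_of_nonneg (le_max_right _ _), Real.norm_eq_abs]
      exact max_le (neg_le_abs w) (abs_nonneg w)
    simpa using pow_le_pow_left₀ (norm_nonneg _) this (n + 2)
  · have h1 : HasDerivAt (fun v : ℝ => (0:ℝ)) 0 v := hasDerivAt_const v 0
    rw [max_eq_right (by linarith), zero_pow n.succ_ne_zero, mul_zero]
    refine h1.congr_of_eventuallyEq ?_
    filter_upwards [Ioi_mem_nhds hv] with w hw
    rw [max_eq_right (by linarith [mem_Ioi.1 hw]), zero_pow (by omega)]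

/-- Lower bound on `(0, 1) × (-1, 1)` from a lower bound `θ` on the incoming boundary of
`(0, 2) × (-1, 2)`. The barrier is a multiple of
`φ₀(x, v) - φ₀(x, 2) + C max(-v, 0)³ - φ₀(δ, 0)`: subtracting `φ₀(x, 2)` makes it nonpositive on
`v = 2`, the cubic term restores the subsolution property where `v < 0`, and the constant, which
vanishes as `δ → 0`, makes it nonpositive on `{δ} × [0, 2]`. -/
lemma lower_phi {M : ℝ} (hM0 : 0 ≤ M) (hM : ∀ x : ℝ, 0 < x → x ≤ 2 → phx x 2 ≤ M)
    {h hv : P2 → ℝ} (hw : IsWeakSolRect 4 h hv) (hc : ContinuousOn h (Hrect 4))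
    (h0 : ∀ p ∈ Hrect 4, 0 ≤ h p) {θ κ : ℝ} (hκ : 0 ≤ κ)
    (hκθ : κ * (phi0 2 (-1) + M / 6) ≤ θ)
    (hθ1 : ∀ x : ℝ, 0 < x → x ≤ 2 → θ ≤ h (x, -1)) (hθ2 : ∀ v ∈ Icc (-1:ℝ) 0, θ ≤ h (2, v))
    {x v : ℝ} (hx : 0 < x) (hx2 : x ≤ 2) (hv' : v ∈ Icc (-1:ℝ) 2) :
    κ * (phi0 x v - phi0 x 2) ≤ h (x, v) := by
  have hpos : ∀ y : ℝ, 0 < y → y ≤ 2 → ∀ v ∈ Icc (-1:ℝ) 2, 0 ≤ h (y, v) := by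
    intro y hy hy2 v hv'
    refine h0 _ ⟨⟨?_, ?_⟩, ?_, ?_⟩ <;> norm_num <;> linarith [hv'.1, hv'.2]
  have key : ∀ δ ∈ Ioo 0 x, κ * (phi0 x v - phi0 x 2 - phi0 δ 0) ≤ h (x, v) := by
    intro δ hδ
    have hyp : ∀ y ∈ Icc δ 2, 0 < y := fun y hy => hδ.1.trans_le hy.1
    have hδp := phi0_pos hδ.1 0
    have := comparison hw hc (x0 := δ) (x1 := 2) (a := -1) (b := 2)
      hδ.1 (hδ.2.trans_le hx2) (by norm_num) (by norm_num) (by norm_num)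
      (W := fun y w => κ * (phi0 y w - phi0 y 2 + M / 6 * max (-w) 0 ^ 3 - phi0 δ 0))
      (Wx := fun y w => κ * (phx y w - phx y 2))
      (Wv := fun y w => κ * (phv y w + M / 6 * (-3 * max (-w) 0 ^ 2)))
      (Wvv := fun y w => κ * (w * phx y w + M / 6 * (6 * max (-w) 0)))
      ?_ ?_ ?_ ?_ ?_ ?_ ?_ ?_ ?_ x ⟨hδ.2.le, hx2⟩ v hv'
    · refine le_trans (mul_le_mul_of_nonneg_left ?_ hκ) this
      have : 0 ≤ M / 6 * max (-v) 0 ^ 3 := by positivity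
      linarith
    · have h1 : ContinuousOn (fun p : P2 => phi0 p.1 p.2) (Icc δ 2 ×ˢ Icc (-1) 2) :=
        phi0_continuousOn.mono fun p hp => ⟨hyp _ hp.1, mem_univ _⟩
      have h2 : ContinuousOn (fun p : P2 => phi0 p.1 2) (Icc δ 2 ×ˢ Icc (-1) 2) :=
        phi0_continuousOn.comp (f := fun p : P2 => ((p.1, 2) : P2))
          (Continuous.continuousOn (by fun_prop)) fun p hp => ⟨hyp _ hp.1, mem_univ _⟩
      refine continuousOn_const.mul (((h1.sub h2).add (Continuous.continuousOn ?_)).sub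
        continuousOn_const)
      fun_prop
    · intro y hy w _
      exact ((((phi0_deriv_x (hyp y hy) w).sub (phi0_deriv_x (hyp y hy) 2)).add_const
        _).sub_const _).const_mul κ
    · intro y hy w _
      refine (((((phi0_deriv_v (hyp y hy) w).sub_const _).add
        ((negPart_pow_deriv 1 w).const_mul (M / 6))).sub_const _).const_mul κ).congr_deriv ?_
      norm_num
    · intro y hy w _
      refine (((phv_deriv_v (hyp y hy) w).add
        (((negPart_pow_deriv 0 w).const_mul (-3)).const_mul (M / 6))).const_mul κ).congr_deriv ?_
      norm_num
      left; left; ring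
    · intro y hy w _
      have h1 := hM y (hyp y hy) hy.2
      have h2 := phx_nonneg (hyp y hy) 2
      have h3 : -(w * phx y 2) - M * max (-w) 0 ≤ 0 := by
        rcases le_total w 0 with hw0 | hw0
        · rw [max_eq_left (by linarith)]
          nlinarith
        · rw [max_eq_right (by linarith)]
          nlinarith
      have h4 := mul_nonpos_of_nonneg_of_nonpos hκ h3
      linarith
    · intro y hy
      refine le_trans ?_ ((hκθ.trans (hθ1 y (hyp y hy) hy.2)))
      refine mul_le_mul_of_nonneg_left ?_ hκ
      have h1 := phi0_mono_x (hyp y hy) hy.2 (-1)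
      have h2 := phi0_pos (hyp y hy) 2
      norm_num
      linarith
    · intro y hy
      refine le_trans ?_ (hpos y (hyp y hy) hy.2 2 ⟨by norm_num, le_rfl⟩)
      refine mul_nonpos_of_nonneg_of_nonpos hκ ?_
      norm_num
      exact hδp.le
    · intro w hw' hw0
      refine le_trans ?_ (hpos δ hδ.1 (hδ.2.le.trans hx2) w hw')
      refine mul_nonpos_of_nonneg_of_nonpos hκ ?_
      have h1 := phi0_anti hδ.1 hw0
      have h2 := phi0_pos hδ.1 2
      rw [max_eq_right (by linarith)]
      norm_num
      linarith
    · intro w hw' hw0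
      refine le_trans ?_ (hκθ.trans (hθ2 w ⟨hw'.1, hw0⟩))
      refine mul_le_mul_of_nonneg_left ?_ hκ
      have h1 := phi0_anti (x := 2) (by norm_num) hw'.1
      have h2 := phi0_pos (x := 2) (by norm_num) 2
      have h3 : max (-w) 0 ^ 3 ≤ 1 :=
        pow_le_one₀ (le_max_right _ _) (max_le (by linarith [hw'.1]) zero_le_one)
      nlinarith
  have hlim : Tendsto (fun δ : ℝ => κ * (phi0 x v - phi0 x 2 - δ ^ ((1:ℝ)/6) * Phi 0)) (𝓝[>] 0)
      (𝓝 (κ * (phi0 x v - phi0 x 2 - (0:ℝ) ^ ((1:ℝ)/6) * Phi 0))) := by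
    refine Tendsto.mono_left ?_ nhdsWithin_le_nhds
    refine Continuous.tendsto ?_ 0
    have := Real.continuous_rpow_const (q := (1:ℝ)/6) (by norm_num)
    fun_prop
  rw [Real.zero_rpow (by norm_num), zero_mul, sub_zero] at hlim
  refine le_of_tendsto hlim ?_
  filter_upwards [Ioo_mem_nhdsGT hx] with δ hδ
  rw [← phi0_zero_v hδ.1]
  exact key δ hδ

theorem statement_9 :
    ∃ c : ℝ, 1 ≤ c ∧
      ∀ h hv : P2 → ℝ, IsWeakSolRect 4 h hv → ContinuousOn h (Hrect 4) →
        (∀ p ∈ Hrect 4, 0 ≤ h p) →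
        sInf ((fun p : P2 => h p / phi0 p.1 p.2) ''
            (Set.Ioo (1:ℝ) 8 ×ˢ Set.Ioo (-2:ℝ) 2))
          ≤ c * sInf ((fun p : P2 => h p / phi0 p.1 p.2) ''
              (Set.Ioo (0:ℝ) 1 ×ˢ Set.Ioo (-1:ℝ) 1)) := by
  obtain ⟨M, hM0, hM⟩ := phx_two_bound
  set B := phi0 2 (-1) + M / 6 with hB
  have hB0 : 0 < B := by
    have := phi0_pos (x := 2) (by norm_num) (-1)
    positivity
  have hP := phi0_pos (x := 2) (by norm_num) 0
  set η := phi0 2 0 * Real.exp (-80) / B * (1 - Real.exp (-(7/9))) with hη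
  have hexp : Real.exp (-(7/9)) < 1 := Real.exp_lt_one_iff.2 (by norm_num)
  have hη0 : 0 < η := by
    have : 0 < 1 - Real.exp (-(7/9)) := by linarith
    positivity
  refine ⟨max 1 η⁻¹, le_max_left _ _, fun h hv hw hc h0 => ?_⟩
  set S := (fun p : P2 => h p / phi0 p.1 p.2) '' (Set.Ioo (1:ℝ) 8 ×ˢ Set.Ioo (-2:ℝ) 2) with hS
  set m := sInf S with hm
  have hSnn : ∀ y ∈ S, 0 ≤ y := by
    rintro _ ⟨p, ⟨⟨h1, h2⟩, h3, h4⟩, rfl⟩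
    refine div_nonneg (h0 p ⟨⟨?_, ?_⟩, ?_, ?_⟩) (phi0_pos (by linarith) _).le <;> norm_num <;>
      linarith
  have hm0 : 0 ≤ m := Real.sInf_nonneg hSnn
  have hmh : ∀ v ∈ Ioo (-2:ℝ) 2, m * phi0 2 v ≤ h (2, v) := by
    intro v hv'
    have h1 : m ≤ h (2, v) / phi0 2 v :=
      csInf_le ⟨0, hSnn⟩ ⟨(2, v), ⟨⟨by norm_num, by norm_num⟩, hv'⟩, rfl⟩
    exact (le_div_iff₀ (phi0_pos (by norm_num) v)).1 h1
  have hmh0 : ∀ v ∈ Ioc (-2:ℝ) 0, m * phi0 2 0 ≤ h (2, v) := fun v hv' =>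
    (mul_le_mul_of_nonneg_left (phi0_anti (by norm_num) hv'.2) hm0).trans
      (hmh v ⟨hv'.1, by linarith [hv'.2]⟩)
  set θ := m * phi0 2 0 * Real.exp (-80) with hθ
  have hθ1 : ∀ x : ℝ, 0 < x → x ≤ 2 → θ ≤ h (x, -1) := fun x hx hx2 =>
    lower_left hw hc h0 (by positivity) (fun v hv' => hmh0 v
      ⟨by linarith [hv'.1], by linarith [hv'.2]⟩) hx hx2
  have hθ2 : ∀ v ∈ Icc (-1:ℝ) 0, θ ≤ h (2, v) := fun v hv' => by
    refine le_trans ?_ (hmh0 v ⟨by linarith [hv'.1], hv'.2⟩)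
    exact mul_le_of_le_one_right (by positivity) (Real.exp_le_one_iff.2 (by norm_num))
  have hbound : ∀ p ∈ Set.Ioo (0:ℝ) 1 ×ˢ Set.Ioo (-1:ℝ) 1, η * m ≤ h p / phi0 p.1 p.2 := by
    rintro ⟨x, v⟩ ⟨⟨hx0, hx1⟩, hv1, hv2⟩
    simp only at hx0 hx1 hv1 hv2 ⊢
    rw [le_div_iff₀ (phi0_pos hx0 v)]
    have hκ : 0 ≤ θ / B := by positivity
    have h1 := lower_phi hM0 hM hw hc h0 hκ (div_mul_cancel₀ θ hB0.ne').le hθ1 hθ2 hx0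
      (by linarith) (v := v) ⟨hv1.le, by linarith⟩
    refine le_trans ?_ h1
    have h2 := phi0_ratio hx0 hx1.le hv2.le
    have h3 : (1 - Real.exp (-(7/9))) * phi0 x v ≤ phi0 x v - phi0 x 2 := by linarith
    have h4 := mul_le_mul_of_nonneg_left h3 hκ
    refine le_trans (le_of_eq ?_) h4
    rw [hη, hθ]
    ring
  have hne : (Set.Ioo (0:ℝ) 1 ×ˢ Set.Ioo (-1:ℝ) 1).Nonempty :=
    ⟨(1/2, 0), ⟨by norm_num, by norm_num⟩, by norm_num, by norm_num⟩
  have hinf : η * m ≤ sInf ((fun p : P2 => h p / phi0 p.1 p.2) ''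
      (Set.Ioo (0:ℝ) 1 ×ˢ Set.Ioo (-1:ℝ) 1)) := by
    refine le_csInf (hne.image _) ?_
    rintro _ ⟨p, hp, rfl⟩
    exact hbound p hp
  have hnn : 0 ≤ η * m := by positivity
  calc m = η⁻¹ * (η * m) := by rw [inv_mul_cancel_left₀ hη0.ne']
    _ ≤ max 1 η⁻¹ * (η * m) := mul_le_mul_of_nonneg_right (le_max_right _ _) hnn
    _ ≤ _ := mul_le_mul_of_nonneg_left hinf (by positivity)
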